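/- Define ~Ω as the set of triples (f, ξ, s^l) with f ∈ Ω_f, ξ ∈ Ω_ξ and s^l ∈ Ω_sl(ξ) such that at the unique optimal solution of the DC-OPF exactly N_G − 1 inequality constraints are binding and the gradients of these binding inequalities together with the gradients of the N+1 equality constraints are linearly independent in ℝ^{N_G+N}. Then the following two sets of N_G×N_L real matrices are equal: (A) the set of all matrices J for which there exist (f, ξ, s^l) ∈ ~Ω and an open set U with s^l ∈ U ⊆ Ω_sl(ξ) such that the OPF map restricted to U is Fréchet differentiable at s^l with derivative J; and (B) the set of all matrices J(S_G,S_B), where S_G ⊆ {1,…,N_G}, S_B ⊆ {1,…,E}, |S_G| + |S_B| = N_G − 1, and S_G ⊥ S_B (for all such (S_G,S_B) the matrix R(S_G,S_B)ᵀ is invertible, so J(S_G,S_B) is well defined). -/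

import Mathlib

open Matrix

noncomputable section

/-- Parameter tuple ξ = (s̄, s̲, p̄, p̲). -/
abbrev XiT (NG E : ℕ) : Type := (Fin NG → ℝ) × (Fin NG → ℝ) × (Fin E → ℝ) × (Fin E → ℝ)

/-- Each column of `C` has exactly one `+1`, one `-1`, and zeros elsewhere. -/
def IsIncidence {NG NL E : ℕ} (C : Matrix (Fin (NG + NL)) (Fin E) ℝ) : Prop :=
  ∀ e : Fin E, ∃ u v : Fin (NG + NL), u ≠ v ∧ C u e = 1 ∧ C v e = -1 ∧
    ∀ w : Fin (NG + NL), w ≠ u → w ≠ v → C w e = 0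

/-- Connectedness: the kernel of `Cᵀ` consists exactly of the constant vectors. -/
def ConnectedIncidence {NG NL E : ℕ} (C : Matrix (Fin (NG + NL)) (Fin E) ℝ) : Prop :=
  ∀ x : Fin (NG + NL) → ℝ, Cᵀ *ᵥ x = 0 ↔ ∃ c : ℝ, x = fun _ => c

/-- `B` is diagonal with strictly positive diagonal entries. -/
def PosDiag {E : ℕ} (B : Matrix (Fin E) (Fin E) ℝ) : Prop :=
  (∀ e, 0 < B e e) ∧ ∀ e e' : Fin E, e ≠ e' → B e e' = 0

/-- Feasibility of `(s^g, θ)` for the DC-OPF with limits `ξ` and loads `sl`. -/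
def Feasible {NG NL E : ℕ} (C : Matrix (Fin (NG + NL)) (Fin E) ℝ)
    (B : Matrix (Fin E) (Fin E) ℝ) (ξ : XiT NG E) (sl : Fin NL → ℝ)
    (sg : Fin NG → ℝ) (θ : Fin (NG + NL) → ℝ) : Prop :=
  (∀ h : 0 < NG + NL, θ ⟨0, h⟩ = 0) ∧
  (C * B * Cᵀ) *ᵥ θ = Fin.append sg (fun j => -(sl j)) ∧
  (∀ i, ξ.2.1 i ≤ sg i ∧ sg i ≤ ξ.1 i) ∧
  (∀ e, ξ.2.2.2 e ≤ ((B * Cᵀ) *ᵥ θ) e ∧ ((B * Cᵀ) *ᵥ θ) e ≤ ξ.2.2.1 e)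

/-- The set Ω_ξ of admissible system limits. -/
def OmegaXi {NG NL E : ℕ} (C : Matrix (Fin (NG + NL)) (Fin E) ℝ)
    (B : Matrix (Fin E) (Fin E) ℝ) : Set (XiT NG E) :=
  { ξ | (∀ i, 0 ≤ ξ.2.1 i) ∧ (∀ i, ξ.2.1 i < ξ.1 i) ∧ (∀ e, ξ.2.2.2 e < ξ.2.2.1 e) ∧
    ∃ sl : Fin NL → ℝ, (∀ j, 0 < sl j) ∧ ∃ sg θ, Feasible C B ξ sl sg θ }

/-- The set Ω_sl(ξ) of strictly positive feasible load profiles. -/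
def OmegaSl {NG NL E : ℕ} (C : Matrix (Fin (NG + NL)) (Fin E) ℝ)
    (B : Matrix (Fin E) (Fin E) ℝ) (ξ : XiT NG E) : Set (Fin NL → ℝ) :=
  { sl | (∀ j, 0 < sl j) ∧ ∃ sg θ, Feasible C B ξ sl sg θ }

/-- `(sg, θ)` is an optimal solution of the DC-OPF. -/
def IsOptimal {NG NL E : ℕ} (C : Matrix (Fin (NG + NL)) (Fin E) ℝ)
    (B : Matrix (Fin E) (Fin E) ℝ) (f : Fin NG → ℝ) (ξ : XiT NG E)
    (sl : Fin NL → ℝ) (sg : Fin NG → ℝ) (θ : Fin (NG + NL) → ℝ) : Prop :=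
  Feasible C B ξ sl sg θ ∧
  ∀ sg' θ', Feasible C B ξ sl sg' θ' → f ⬝ᵥ sg ≤ f ⬝ᵥ sg'

/-- The matrix M: first N rows are C B Cᵀ, last row is e₁ᵀ. -/
def Mmat {NG NL E : ℕ} (C : Matrix (Fin (NG + NL)) (Fin E) ℝ)
    (B : Matrix (Fin E) (Fin E) ℝ) : Matrix (Fin (NG + NL + 1)) (Fin (NG + NL)) ℝ :=
  Matrix.of fun i j => if h : (i : ℕ) < NG + NL then (C * B * Cᵀ) ⟨(i : ℕ), h⟩ j
    else if (j : ℕ) = 0 then 1 else 0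

/-- KKT point for the DC-OPF. -/
def IsKKT {NG NL E : ℕ} (C : Matrix (Fin (NG + NL)) (Fin E) ℝ)
    (B : Matrix (Fin E) (Fin E) ℝ) (f : Fin NG → ℝ) (ξ : XiT NG E)
    (sl : Fin NL → ℝ) (sg : Fin NG → ℝ) (θ : Fin (NG + NL) → ℝ)
    (τ : Fin (NG + NL + 1) → ℝ) (μp μm : Fin E → ℝ) (lp lm : Fin NG → ℝ) : Prop :=
  Feasible C B ξ sl sg θ ∧
  (Mmat C B)ᵀ *ᵥ τ + (C * B) *ᵥ (μp - μm) = 0 ∧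
  (∀ i : Fin NG, -f i = -τ (Fin.castLE (by omega) i) + lp i - lm i) ∧
  (∀ e, 0 ≤ μp e) ∧ (∀ e, 0 ≤ μm e) ∧ (∀ i, 0 ≤ lp i) ∧ (∀ i, 0 ≤ lm i) ∧
  μp ⬝ᵥ (((B * Cᵀ) *ᵥ θ) - ξ.2.2.1) = 0 ∧
  μm ⬝ᵥ (ξ.2.2.2 - ((B * Cᵀ) *ᵥ θ)) = 0 ∧
  lp ⬝ᵥ (sg - ξ.1) = 0 ∧
  lm ⬝ᵥ (ξ.2.1 - sg) = 0

/-- ℓ₀ "norm": number of nonzero entries. -/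
def nnz {n : ℕ} (v : Fin n → ℝ) : ℕ := Set.ncard { i | v i ≠ 0 }

/-- The set Ω_f of well-behaved cost vectors. -/
def OmegaF {NG NL E : ℕ} (C : Matrix (Fin (NG + NL)) (Fin E) ℝ)
    (B : Matrix (Fin E) (Fin E) ℝ) : Set (Fin NG → ℝ) :=
  { f | (∀ i, 0 ≤ f i) ∧
    ∀ ξ ∈ OmegaXi C B, ∀ sl ∈ OmegaSl C B ξ,
      (∃! p : (Fin NG → ℝ) × (Fin (NG + NL) → ℝ), IsOptimal C B f ξ sl p.1 p.2) ∧
      ∀ sg θ τ μp μm lp lm, IsKKT C B f ξ sl sg θ τ μp μm lp lm →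
        NG - 1 ≤ nnz μp + nnz μm + nnz lp + nnz lm }

/-- Number of binding inequality constraints at `(sg, θ)` (among the 2N_G + 2E). -/
def bindingCount {NG NL E : ℕ} (C : Matrix (Fin (NG + NL)) (Fin E) ℝ)
    (B : Matrix (Fin E) (Fin E) ℝ) (ξ : XiT NG E) (sg : Fin NG → ℝ)
    (θ : Fin (NG + NL) → ℝ) : ℕ :=
  Set.ncard { i : Fin NG | sg i = ξ.1 i } + Set.ncard { i : Fin NG | sg i = ξ.2.1 i } +
  Set.ncard { e : Fin E | ((B * Cᵀ) *ᵥ θ) e = ξ.2.2.1 e } +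
  Set.ncard { e : Fin E | ((B * Cᵀ) *ᵥ θ) e = ξ.2.2.2 e }

/-- ~Ω_sl(ξ, f): loads with exactly N_G − 1 binding constraints at the optimum. -/
def TOmegaSl {NG NL E : ℕ} (C : Matrix (Fin (NG + NL)) (Fin E) ℝ)
    (B : Matrix (Fin E) (Fin E) ℝ) (f : Fin NG → ℝ) (ξ : XiT NG E) :
    Set (Fin NL → ℝ) :=
  { sl | sl ∈ OmegaSl C B ξ ∧
    ∀ sg θ, IsOptimal C B f ξ sl sg θ → bindingCount C B ξ sg θ = NG - 1 }

/-- Indices of binding inequality constraints: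
`inl i` = upper generation, `inr (inl i)` = lower generation,
`inr (inr (inl e))` = upper flow, `inr (inr (inr e))` = lower flow. -/
def BindingIdx {NG NL E : ℕ} (C : Matrix (Fin (NG + NL)) (Fin E) ℝ)
    (B : Matrix (Fin E) (Fin E) ℝ) (ξ : XiT NG E) (sg : Fin NG → ℝ)
    (θ : Fin (NG + NL) → ℝ) : Set (Fin NG ⊕ Fin NG ⊕ Fin E ⊕ Fin E) :=
  { c | match c with
    | Sum.inl i => sg i = ξ.1 i
    | Sum.inr (Sum.inl i) => sg i = ξ.2.1 i
    | Sum.inr (Sum.inr (Sum.inl e)) => ((B * Cᵀ) *ᵥ θ) e = ξ.2.2.1 e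
    | Sum.inr (Sum.inr (Sum.inr e)) => ((B * Cᵀ) *ᵥ θ) e = ξ.2.2.2 e }

/-- Gradients of the N + 1 equality constraints, as vectors in ℝ^{N_G} × ℝ^{N}. -/
def eqGrad {NG NL E : ℕ} (C : Matrix (Fin (NG + NL)) (Fin E) ℝ)
    (B : Matrix (Fin E) (Fin E) ℝ) :
    (Unit ⊕ Fin (NG + NL)) → (Fin NG → ℝ) × (Fin (NG + NL) → ℝ)
  | Sum.inl _ => (0, fun j => if (j : ℕ) = 0 then 1 else 0)
  | Sum.inr i => ((fun k : Fin NG => if (k : ℕ) = (i : ℕ) then -1 else 0),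
      fun j => (C * B * Cᵀ) i j)

/-- Gradients of the inequality constraints. -/
def ineqGrad {NG NL E : ℕ} (C : Matrix (Fin (NG + NL)) (Fin E) ℝ)
    (B : Matrix (Fin E) (Fin E) ℝ) :
    (Fin NG ⊕ Fin NG ⊕ Fin E ⊕ Fin E) → (Fin NG → ℝ) × (Fin (NG + NL) → ℝ)
  | Sum.inl i => (Pi.single i 1, 0)
  | Sum.inr (Sum.inl i) => (-Pi.single i 1, 0)
  | Sum.inr (Sum.inr (Sum.inl e)) => (0, fun j => (B * Cᵀ) e j)
  | Sum.inr (Sum.inr (Sum.inr e)) => (0, fun j => -(B * Cᵀ) e j)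

/-- The family of gradients of all equality constraints together with the binding
inequality constraints at `(sg, θ)`. -/
def fullGrad {NG NL E : ℕ} (C : Matrix (Fin (NG + NL)) (Fin E) ℝ)
    (B : Matrix (Fin E) (Fin E) ℝ) (ξ : XiT NG E) (sg : Fin NG → ℝ)
    (θ : Fin (NG + NL) → ℝ) :
    ((Unit ⊕ Fin (NG + NL)) ⊕ ↥(BindingIdx C B ξ sg θ)) →
      (Fin NG → ℝ) × (Fin (NG + NL) → ℝ) :=
  fun i => match i with
    | Sum.inl j => eqGrad C B j
    | Sum.inr c => ineqGrad C B c.1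

/-- S_G ⊥ S_B : the equality-constraint gradients together with the gradients
`(e_i, 0)`, `i ∈ S_G`, and `(0, row e of B Cᵀ)`, `e ∈ S_B`, are linearly independent. -/
def Perp {NG NL E : ℕ} (C : Matrix (Fin (NG + NL)) (Fin E) ℝ)
    (B : Matrix (Fin E) (Fin E) ℝ) (SG : Finset (Fin NG)) (SB : Finset (Fin E)) : Prop :=
  LinearIndependent ℝ (fun i : (Unit ⊕ Fin (NG + NL)) ⊕ (↥SG ⊕ ↥SB) =>
    match i with
    | Sum.inl j => eqGrad C B j
    | Sum.inr (Sum.inl g) => ((Pi.single (g : Fin NG) 1 : Fin NG → ℝ), (0 : Fin (NG + NL) → ℝ))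
    | Sum.inr (Sum.inr e) => ((0 : Fin NG → ℝ), fun j => (B * Cᵀ) (e : Fin E) j))

/-- The OPF operator: the generation part of the (unique) optimal solution. -/
def OPFmap {NG NL E : ℕ} (C : Matrix (Fin (NG + NL)) (Fin E) ℝ)
    (B : Matrix (Fin E) (Fin E) ℝ) (f : Fin NG → ℝ) (ξ : XiT NG E)
    (sl : Fin NL → ℝ) : Fin NG → ℝ := by
  classical
  exact if h : ∃ p : (Fin NG → ℝ) × (Fin (NG + NL) → ℝ), IsOptimal C B f ξ sl p.1 p.2
    then h.choose.1 else 0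

/-- The matrix R(S_G, S_B)ᵀ: rows N_G+1,…,N of C B Cᵀ; the rows of C B Cᵀ indexed
by S_G; the rows of B Cᵀ indexed by S_B; and e₁ᵀ. -/
def Rmat {NG NL E : ℕ} (C : Matrix (Fin (NG + NL)) (Fin E) ℝ)
    (B : Matrix (Fin E) (Fin E) ℝ) (SG : Finset (Fin NG)) (SB : Finset (Fin E)) :
    Matrix ((Fin NL ⊕ (↥SG ⊕ ↥SB)) ⊕ Unit) (Fin (NG + NL)) ℝ :=
  Matrix.of fun i j => match i with
    | Sum.inl (Sum.inl k) => (C * B * Cᵀ) (Fin.natAdd NG k) j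
    | Sum.inl (Sum.inr (Sum.inl g)) => (C * B * Cᵀ) (Fin.castAdd NL (g : Fin NG)) j
    | Sum.inl (Sum.inr (Sum.inr e)) => (B * Cᵀ) (e : Fin E) j
    | Sum.inr _ => if (j : ℕ) = 0 then 1 else 0

/-- The matrix Π applied to a load vector: embeds ℝ^{N_L} in the row-index space. -/
def padSl {NG NL E : ℕ} (SG : Finset (Fin NG)) (SB : Finset (Fin E))
    (v : Fin NL → ℝ) : (Fin NL ⊕ (↥SG ⊕ ↥SB)) ⊕ Unit → ℝ
  | Sum.inl (Sum.inl k) => v k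
  | _ => 0

/-- J(S_G, S_B) as a map: v ↦ −G (R(S_G,S_B)ᵀ)⁻¹ Π v, where G consists of the
first N_G rows of C B Cᵀ. -/
def JFun {NG NL E : ℕ} (C : Matrix (Fin (NG + NL)) (Fin E) ℝ)
    (B : Matrix (Fin E) (Fin E) ℝ) (SG : Finset (Fin NG)) (SB : Finset (Fin E))
    (v : Fin NL → ℝ) : Fin NG → ℝ :=
  fun i =>
    -(((C * B * Cᵀ) *ᵥ (Function.invFun (Rmat C B SG SB).mulVec (padSl SG SB v)))
      (Fin.castAdd NL i))

/-- J(S_G, S_B) as an N_G × N_L matrix. -/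
def Jmatrix {NG NL E : ℕ} (C : Matrix (Fin (NG + NL)) (Fin E) ℝ)
    (B : Matrix (Fin E) (Fin E) ℝ) (SG : Finset (Fin NG)) (SB : Finset (Fin E)) :
    Matrix (Fin NG) (Fin NL) ℝ :=
  Matrix.of fun i j => JFun C B SG SB (Pi.single j 1) i

section helpers

variable {NG NL E : ℕ} {C : Matrix (Fin (NG + NL)) (Fin E) ℝ} {B : Matrix (Fin E) (Fin E) ℝ}

lemma posDiag_eq (hB : PosDiag B) : B = Matrix.diagonal (fun e => B e e) := by
  ext e e'
  by_cases h : e = e'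
  · subst h; simp
  · rw [Matrix.diagonal_apply_ne _ h, hB.2 e e' h]

lemma posDiag_transpose (hB : PosDiag B) : Bᵀ = B := by
  rw [posDiag_eq hB, Matrix.diagonal_transpose]

lemma lap_sum (hConn : ConnectedIncidence C) (v : Fin (NG + NL) → ℝ) :
    ∑ i, ((C * B * Cᵀ) *ᵥ v) i = 0 := by
  have h1 : Cᵀ *ᵥ (fun _ => (1 : ℝ)) = 0 := (hConn _).2 ⟨1, rfl⟩
  have h2 : (fun _ => (1 : ℝ)) ⬝ᵥ ((C * B * Cᵀ) *ᵥ v) = 0 := by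
    rw [Matrix.mul_assoc, ← Matrix.mulVec_mulVec, Matrix.dotProduct_mulVec,
      ← Matrix.mulVec_transpose, h1, zero_dotProduct]
  simpa [dotProduct] using h2

lemma lap_ker (hConn : ConnectedIncidence C) (hB : PosDiag B) (v : Fin (NG + NL) → ℝ)
    (hv : (C * B * Cᵀ) *ᵥ v = 0) : ∃ c : ℝ, v = fun _ => c := by
  apply (hConn v).1
  have h2 : v ⬝ᵥ ((C * B * Cᵀ) *ᵥ v) = 0 := by rw [hv, dotProduct_zero]
  rw [Matrix.mul_assoc, ← Matrix.mulVec_mulVec, Matrix.dotProduct_mulVec,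
      ← Matrix.mulVec_transpose, ← Matrix.mulVec_mulVec] at h2
  have h3 : ∀ e, (B *ᵥ (Cᵀ *ᵥ v)) e = B e e * (Cᵀ *ᵥ v) e := by
    intro e
    conv_lhs => rw [posDiag_eq hB]
    rw [Matrix.mulVec_diagonal]
  have h4 : ∑ e, B e e * ((Cᵀ *ᵥ v) e)^2 = 0 := by
    rw [← h2]
    unfold dotProduct
    refine Finset.sum_congr rfl fun e _ => ?_
    rw [h3]; ring
  have h5 := (Finset.sum_eq_zero_iff_of_nonneg
    (fun e _ => mul_nonneg (hB.1 e).le (sq_nonneg _))).1 h4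
  ext e
  have := h5 e (Finset.mem_univ e)
  have hb := (hB.1 e).ne'
  simpa [hb] using this

lemma lap_ker0 (hConn : ConnectedIncidence C) (hB : PosDiag B) (z : Fin (NG + NL))
    (v : Fin (NG + NL) → ℝ)
    (hv : (C * B * Cᵀ) *ᵥ v = 0) (hz : v z = 0) : v = 0 := by
  obtain ⟨c, rfl⟩ := lap_ker hConn hB v hv
  simp only at hz
  subst hz; rfl

/-- The invertible map `θ ↦ L θ + θ₁ 1`. -/
def Kmap (C : Matrix (Fin (NG + NL)) (Fin E) ℝ) (B : Matrix (Fin E) (Fin E) ℝ)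
    (z : Fin (NG + NL)) : (Fin (NG + NL) → ℝ) →ₗ[ℝ] (Fin (NG + NL) → ℝ) where
  toFun θ := (C * B * Cᵀ) *ᵥ θ + fun _ => θ z
  map_add' x y := by ext i; simp [Matrix.mulVec_add]; ring
  map_smul' c x := by ext i; simp [Matrix.mulVec_smul]; ring

lemma Kmap_sum (hConn : ConnectedIncidence C) (z : Fin (NG + NL)) (v : Fin (NG + NL) → ℝ) 
    (h : ∑ i, Kmap C B z v i = 0) : v z = 0 := by
  have := lap_sum (B := B) hConn v
  simp only [Kmap, LinearMap.coe_mk, AddHom.coe_mk, Pi.add_apply, Finset.sum_add_distrib, this,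
    Finset.sum_const, zero_add, Finset.card_univ, Fintype.card_fin, nsmul_eq_mul] at h
  have hp : (((NG + NL : ℕ)) : ℝ) ≠ 0 := by
    have := z.pos
    exact_mod_cast this.ne'
  exact (mul_eq_zero.1 h).resolve_left hp

lemma Kmap_inj (hConn : ConnectedIncidence C) (hB : PosDiag B) (z : Fin (NG + NL)) :
    Function.Injective (Kmap C B z) := by
  rw [← LinearMap.ker_eq_bot, LinearMap.ker_eq_bot']
  intro v hv
  have hz : v z = 0 := Kmap_sum (B := B) hConn z v (by rw [hv]; simp)
  refine lap_ker0 hConn hB z v ?_ hz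
  ext i
  have := congrFun hv i
  simpa [Kmap, hz] using this

/-- Linear equivalence version of `Kmap`. -/
def Kequiv (hConn : ConnectedIncidence C) (hB : PosDiag B) (z : Fin (NG + NL)) :
    (Fin (NG + NL) → ℝ) ≃ₗ[ℝ] (Fin (NG + NL) → ℝ) :=
  LinearEquiv.ofInjectiveEndo (Kmap C B z) (Kmap_inj hConn hB z)

lemma Kequiv_apply (hConn : ConnectedIncidence C) (hB : PosDiag B) (z : Fin (NG + NL)) (v) :
    Kequiv hConn hB z v = (C * B * Cᵀ) *ᵥ v + fun _ => v z := rfl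

lemma lap_solve (hConn : ConnectedIncidence C) (hB : PosDiag B) (z : Fin (NG + NL))
    (y : Fin (NG + NL) → ℝ) (hy : ∑ i, y i = 0) :
    ∃ θ : Fin (NG + NL) → ℝ, θ z = 0 ∧ (C * B * Cᵀ) *ᵥ θ = y := by
  refine ⟨(Kequiv hConn hB z).symm y, ?_⟩
  have h1 : Kequiv hConn hB z ((Kequiv hConn hB z).symm y) = y := by simp
  have h2 : ((Kequiv hConn hB z).symm y) z = 0 :=
    Kmap_sum (B := B) hConn z _ (by change ∑ i, Kequiv hConn hB z _ i = 0; rw [h1]; exact hy)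
  refine ⟨h2, ?_⟩
  rw [Kequiv_apply, h2] at h1
  ext i
  have := congrFun h1 i
  simpa using this

/-! Rmat -/

lemma Rmat_load (SG : Finset (Fin NG)) (SB : Finset (Fin E)) (v : Fin (NG + NL) → ℝ) (k : Fin NL) :
    (Rmat C B SG SB *ᵥ v) (Sum.inl (Sum.inl k)) = ((C * B * Cᵀ) *ᵥ v) (Fin.natAdd NG k) := rfl

lemma Rmat_gen (SG : Finset (Fin NG)) (SB : Finset (Fin E)) (v : Fin (NG + NL) → ℝ) (g : SG) :
    (Rmat C B SG SB *ᵥ v) (Sum.inl (Sum.inr (Sum.inl g))) =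
      ((C * B * Cᵀ) *ᵥ v) (Fin.castAdd NL g) := rfl

lemma Rmat_br (SG : Finset (Fin NG)) (SB : Finset (Fin E)) (v : Fin (NG + NL) → ℝ) (e : SB) :
    (Rmat C B SG SB *ᵥ v) (Sum.inl (Sum.inr (Sum.inr e))) =
      ((B * Cᵀ) *ᵥ v) e := rfl

lemma e1_dot (z : Fin (NG + NL)) (hz : (z : ℕ) = 0) (v : Fin (NG + NL) → ℝ) :
    (fun j : Fin (NG + NL) => if (j : ℕ) = 0 then (1 : ℝ) else 0) ⬝ᵥ v = v z := by
  unfold dotProduct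
  rw [Finset.sum_eq_single z]
  · simp [hz]
  · intro j _ hj
    have : (j : ℕ) ≠ 0 := fun h => hj (Fin.ext (by omega))
    simp [this]
  · simp

lemma Rmat_ref (SG : Finset (Fin NG)) (SB : Finset (Fin E)) (z : Fin (NG + NL))
    (hz : (z : ℕ) = 0) (v : Fin (NG + NL) → ℝ) (u : Unit) :
    (Rmat C B SG SB *ᵥ v) (Sum.inr u) = v z := e1_dot z hz v

lemma Rmat_ker_iff (SG : Finset (Fin NG)) (SB : Finset (Fin E)) (z : Fin (NG + NL))
    (hz : (z : ℕ) = 0) (v : Fin (NG + NL) → ℝ) :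
    Rmat C B SG SB *ᵥ v = 0 ↔ v z = 0 ∧ (∀ k, ((C * B * Cᵀ) *ᵥ v) (Fin.natAdd NG k) = 0) ∧
      (∀ i ∈ SG, ((C * B * Cᵀ) *ᵥ v) (Fin.castAdd NL i) = 0) ∧
      (∀ e ∈ SB, ((B * Cᵀ) *ᵥ v) e = 0) := by
  constructor
  · intro h
    exact ⟨by rw [← Rmat_ref SG SB z hz v ()]; rw [h]; rfl, fun k => congrFun h (Sum.inl (Sum.inl k)),
      fun i hi => congrFun h (Sum.inl (Sum.inr (Sum.inl ⟨i, hi⟩))),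
      fun e he => congrFun h (Sum.inl (Sum.inr (Sum.inr ⟨e, he⟩)))⟩
  · rintro ⟨h1, h2, h3, h4⟩
    ext c
    rcases c with (k | g | e) | u
    · exact h2 k
    · exact h3 g g.2
    · exact h4 e e.2
    · rw [Rmat_ref SG SB z hz v u]; exact h1

/-- Cost change along a voltage direction. -/
def gcost (C : Matrix (Fin (NG + NL)) (Fin E) ℝ) (B : Matrix (Fin E) (Fin E) ℝ)
    (f : Fin NG → ℝ) (v : Fin (NG + NL) → ℝ) : ℝ :=
  ∑ i, f i * ((C * B * Cᵀ) *ᵥ v) (Fin.castAdd NL i)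

/-- Genericity of the cost vector. -/
def Gen (C : Matrix (Fin (NG + NL)) (Fin E) ℝ) (B : Matrix (Fin E) (Fin E) ℝ)
    (f : Fin NG → ℝ) : Prop :=
  ∀ (SG : Finset (Fin NG)) (SB : Finset (Fin E)), (∃ v ≠ 0, Rmat C B SG SB *ᵥ v = 0) →
    ∃ v, Rmat C B SG SB *ᵥ v = 0 ∧ gcost C B f v ≠ 0

/-- Bad cost vectors for a given set pair. -/
def badSub (C : Matrix (Fin (NG + NL)) (Fin E) ℝ) (B : Matrix (Fin E) (Fin E) ℝ)
    (SG : Finset (Fin NG)) (SB : Finset (Fin E)) : Submodule ℝ (Fin NG → ℝ) where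
  carrier := {f | ∀ v, Rmat C B SG SB *ᵥ v = 0 → gcost C B f v = 0}
  add_mem' := by
    intro a b ha hb v hv
    have h1 := ha v hv
    have h2 := hb v hv
    unfold gcost at *
    simp only [Pi.add_apply, add_mul, Finset.sum_add_distrib, h1, h2, add_zero]
  zero_mem' := by intro v _; simp [gcost]
  smul_mem' := by
    intro c a ha v hv
    have h1 := ha v hv
    unfold gcost at *
    simp only [Pi.smul_apply, smul_eq_mul, mul_assoc, ← Finset.mul_sum, h1, mul_zero]

lemma gcost_const (hConn : ConnectedIncidence C) (c : ℝ) (v : Fin (NG + NL) → ℝ)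
    (hv : ∀ k, ((C * B * Cᵀ) *ᵥ v) (Fin.natAdd NG k) = 0) : gcost C B (fun _ => c) v = 0 := by
  have := lap_sum (B := B) hConn v
  rw [Fin.sum_univ_add] at this
  simp only [hv, Finset.sum_const_zero, add_zero] at this
  simp [gcost, ← Finset.mul_sum, this]

lemma exists_gen (hNG : 0 < NG) (hConn : ConnectedIncidence C) (hB : PosDiag B) :
    ∃ f : Fin NG → ℝ, (∀ i, 0 ≤ f i) ∧ Gen C B f := by
  classical
  set z : Fin (NG + NL) := ⟨0, by omega⟩ with hz
  have hz0 : (z : ℕ) = 0 := rfl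
  let ι := {T : Finset (Fin NG) × Finset (Fin E) // ∃ v ≠ 0, Rmat C B T.1 T.2 *ᵥ v = 0}
  have hne : (⋃ i : ι, (badSub C B i.1.1 i.1.2 : Set (Fin NG → ℝ))) ≠ Set.univ := by
    intro hcov
    obtain ⟨⟨⟨SG, SB⟩, v, hv0, hv⟩, htop⟩ := Subspace.exists_eq_top_of_iUnion_eq_univ hcov
    apply hv0
    have hk := (Rmat_ker_iff SG SB z hz0 v).1 hv
    have hmem : (fun i => ((C * B * Cᵀ) *ᵥ v) (Fin.castAdd NL i)) ∈ badSub C B SG SB := by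
      simp only at htop
      rw [htop]; trivial
    have h0 := hmem v hv
    unfold gcost at h0
    have h1 := (Finset.sum_eq_zero_iff_of_nonneg (fun i _ => mul_self_nonneg _)).1 h0
    refine lap_ker0 hConn hB z v ?_ hk.1
    ext j
    refine Fin.addCases (fun i => ?_) (fun k => ?_) j
    · simpa using h1 i (Finset.mem_univ _)
    · exact hk.2.1 k
  obtain ⟨f, hf⟩ := (Set.ne_univ_iff_exists_notMem _).1 hne
  simp only [Set.mem_iUnion, not_exists] at hf
  refine ⟨fun i => f i + ∑ j, |f j|, fun i => ?_, ?_⟩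
  · have h1 : |f i| ≤ ∑ j, |f j| :=
      Finset.single_le_sum (f := fun j => |f j|) (fun j _ => abs_nonneg _) (Finset.mem_univ i)
    have := neg_abs_le (f i)
    linarith
  · intro SG SB hv
    have h1 := hf ⟨(SG, SB), hv⟩
    have h2 : ¬ ∀ v, Rmat C B SG SB *ᵥ v = 0 → gcost C B f v = 0 := h1
    push Not at h2
    obtain ⟨v, hv, hc⟩ := h2
    refine ⟨v, hv, ?_⟩
    have h3 := gcost_const (C := C) (B := B) hConn (∑ j, |f j|) v
      ((Rmat_ker_iff SG SB z hz0 v).1 hv).2.1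
    unfold gcost at *
    simp only [add_mul, Finset.sum_add_distrib, h3, add_zero]
    exact hc

lemma small_step (a a' d : ℝ) (hle : a ≤ a') (h : a = a' → d ≤ 0) :
    ∀ᶠ t in nhdsWithin (0 : ℝ) (Set.Ioi 0), a + t * d ≤ a' := by
  rcases hle.lt_or_eq with hlt | heq
  · have hc : Filter.Tendsto (fun t : ℝ => a + t * d) (nhds 0) (nhds (a + 0 * d)) :=
      (by fun_prop : Continuous fun t : ℝ => a + t * d).tendsto 0
    rw [zero_mul, add_zero] at hc
    exact ((hc.eventually (gt_mem_nhds hlt)).filter_mono nhdsWithin_le_nhds).mono fun t ht => ht.le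
  · filter_upwards [self_mem_nhdsWithin] with t ht
    have : t * d ≤ 0 := mul_nonpos_of_nonneg_of_nonpos (le_of_lt ht) (h heq)
    linarith

lemma gcost_smul (f : Fin NG → ℝ) (t : ℝ) (v : Fin (NG + NL) → ℝ) :
    gcost C B f (t • v) = t * gcost C B f v := by
  unfold gcost
  rw [Finset.mul_sum]
  refine Finset.sum_congr rfl fun i _ => ?_
  rw [Matrix.mulVec_smul, Pi.smul_apply, smul_eq_mul]; ring

lemma gcost_neg (f : Fin NG → ℝ) (v : Fin (NG + NL) → ℝ) :
    gcost C B f (-v) = - gcost C B f v := by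
  have := gcost_smul (C := C) (B := B) f (-1) v
  simpa using this

/-- generation part of `L v`. -/
def gpart (C : Matrix (Fin (NG + NL)) (Fin E) ℝ) (B : Matrix (Fin E) (Fin E) ℝ)
    (v : Fin (NG + NL) → ℝ) : Fin NG → ℝ := fun i => ((C * B * Cᵀ) *ᵥ v) (Fin.castAdd NL i)

lemma gcost_eq (f : Fin NG → ℝ) (v : Fin (NG + NL) → ℝ) :
    gcost C B f v = f ⬝ᵥ gpart C B v := rfl

lemma balance_add {sg : Fin NG → ℝ} {sl : Fin NL → ℝ} {θ v : Fin (NG + NL) → ℝ}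
    (h : (C * B * Cᵀ) *ᵥ θ = Fin.append sg (fun j => -(sl j)))
    (w : Fin NL → ℝ) (hv : ∀ k, ((C * B * Cᵀ) *ᵥ v) (Fin.natAdd NG k) = - w k) :
    (C * B * Cᵀ) *ᵥ (θ + v) = Fin.append (sg + gpart C B v) (fun j => -((sl + w) j)) := by
  rw [Matrix.mulVec_add, h]
  ext j
  refine Fin.addCases (fun i => ?_) (fun k => ?_) j
  · simp [gpart]
  · simp [hv]; ring

lemma opt_dir (z : Fin (NG + NL)) (hz0 : (z : ℕ) = 0) {f : Fin NG → ℝ} {ξ : XiT NG E}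
    {sl : Fin NL → ℝ} {sg : Fin NG → ℝ}
    {θ : Fin (NG + NL) → ℝ} (hopt : IsOptimal C B f ξ sl sg θ) (v : Fin (NG + NL) → ℝ)
    (hz : v z = 0) (hl : ∀ k, ((C * B * Cᵀ) *ᵥ v) (Fin.natAdd NG k) = 0)
    (h1 : ∀ i, sg i = ξ.1 i → gpart C B v i ≤ 0)
    (h2 : ∀ i, sg i = ξ.2.1 i → 0 ≤ gpart C B v i)
    (h3 : ∀ e, ((B * Cᵀ) *ᵥ θ) e = ξ.2.2.1 e → ((B * Cᵀ) *ᵥ v) e ≤ 0)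
    (h4 : ∀ e, ((B * Cᵀ) *ᵥ θ) e = ξ.2.2.2 e → 0 ≤ ((B * Cᵀ) *ᵥ v) e) :
    0 ≤ gcost C B f v := by
  obtain ⟨⟨hf1, hf2, hf3, hf4⟩, ho⟩ := hopt
  have e1 : ∀ᶠ t in nhdsWithin (0 : ℝ) (Set.Ioi 0), ∀ i, sg i + t * gpart C B v i ≤ ξ.1 i :=
    Filter.eventually_all.2 fun i => small_step _ _ _ (hf3 i).2 (h1 i)
  have e2 : ∀ᶠ t in nhdsWithin (0 : ℝ) (Set.Ioi 0),
      ∀ i, - sg i + t * (- gpart C B v i) ≤ - ξ.2.1 i :=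
    Filter.eventually_all.2 fun i => small_step _ _ _ (neg_le_neg (hf3 i).1)
      (fun h => neg_nonpos.2 (h2 i (neg_injective h)))
  have e3 : ∀ᶠ t in nhdsWithin (0 : ℝ) (Set.Ioi 0),
      ∀ e, ((B * Cᵀ) *ᵥ θ) e + t * ((B * Cᵀ) *ᵥ v) e ≤ ξ.2.2.1 e :=
    Filter.eventually_all.2 fun i => small_step _ _ _ (hf4 i).2 (h3 i)
  have e4 : ∀ᶠ t in nhdsWithin (0 : ℝ) (Set.Ioi 0),
      ∀ e, - ((B * Cᵀ) *ᵥ θ) e + t * (- ((B * Cᵀ) *ᵥ v) e) ≤ - ξ.2.2.2 e :=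
    Filter.eventually_all.2 fun i => small_step _ _ _ (neg_le_neg (hf4 i).1)
      (fun h => neg_nonpos.2 (h4 i (neg_injective h)))
  obtain ⟨t, ⟨⟨⟨g1, g2⟩, g3⟩, g4⟩, ht⟩ :=
    ((((e1.and e2).and e3).and e4).and self_mem_nhdsWithin).exists
  have ht : 0 < t := ht
  have hfeas : Feasible C B ξ sl (sg + gpart C B (t • v)) (θ + t • v) := by
    have hgp : ∀ i, gpart C B (t • v) i = t * gpart C B v i := by
      intro i; simp [gpart, Matrix.mulVec_smul]
    refine ⟨fun h => ?_, ?_, fun i => ?_, fun e => ?_⟩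
    · have : (⟨0, h⟩ : Fin (NG + NL)) = z := Fin.ext hz0.symm
      have h0 := hf1 h
      rw [this] at h0 ⊢
      simp [h0, hz]
    · have := balance_add (v := t • v) hf2 0 (by intro k; simp [Matrix.mulVec_smul, hl])
      simpa using this
    · have a1 := g1 i
      have a2 := g2 i
      simp only [Pi.add_apply, hgp]
      constructor <;> linarith
    · have a1 := g3 e
      have a2 := g4 e
      simp only [Matrix.mulVec_add, Matrix.mulVec_smul, Pi.add_apply, Pi.smul_apply, smul_eq_mul]
      constructor <;> linarith
  have := ho _ _ hfeas
  rw [dotProduct_add, ← gcost_eq, gcost_smul] at this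
  have h5 : 0 ≤ t * gcost C B f v := by linarith
  exact nonneg_of_mul_nonneg_right h5 ht

lemma feasible_theta (hConn : ConnectedIncidence C) (hB : PosDiag B) (z : Fin (NG + NL))
    (hz0 : (z : ℕ) = 0) {ξ : XiT NG E} {sl : Fin NL → ℝ} {sg : Fin NG → ℝ}
    {θ : Fin (NG + NL) → ℝ} (h : Feasible C B ξ sl sg θ) :
    θ = (Kequiv hConn hB z).symm (Fin.append sg (fun j => -(sl j))) := by
  rw [LinearEquiv.eq_symm_apply, Kequiv_apply, h.2.1]
  have hz : θ z = 0 := by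
    have h0 := h.1 (z.pos)
    have : (⟨0, z.pos⟩ : Fin (NG + NL)) = z := Fin.ext hz0.symm
    rwa [this] at h0
  rw [hz]; ext i; simp

lemma feasible_z (z : Fin (NG + NL))
    (hz0 : (z : ℕ) = 0) {ξ : XiT NG E} {sl : Fin NL → ℝ} {sg : Fin NG → ℝ}
    {θ : Fin (NG + NL) → ℝ} (h : Feasible C B ξ sl sg θ) : θ z = 0 := by
  have h0 := h.1 (z.pos)
  have : (⟨0, z.pos⟩ : Fin (NG + NL)) = z := Fin.ext hz0.symm
  rwa [this] at h0

lemma exists_opt (hConn : ConnectedIncidence C) (hB : PosDiag B) (z : Fin (NG + NL))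
    (hz0 : (z : ℕ) = 0) (f : Fin NG → ℝ) (ξ : XiT NG E) (sl : Fin NL → ℝ)
    (hsl : ∃ sg θ, Feasible C B ξ sl sg θ) : ∃ sg θ, IsOptimal C B f ξ sl sg θ := by
  let Θ : (Fin NG → ℝ) → (Fin (NG + NL) → ℝ) := fun sg =>
    (Kequiv hConn hB z).symm (Fin.append sg (fun j => -(sl j)))
  have happ : Continuous fun sg : Fin NG → ℝ => Fin.append sg (fun j => -(sl j)) := by
    refine continuous_pi fun j => ?_
    refine Fin.addCases (fun i => ?_) (fun k => ?_) j
    · simpa using continuous_apply i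
    · simpa using continuous_const
  have hΘ : Continuous Θ :=
    (LinearMap.continuous_of_finiteDimensional (Kequiv hConn hB z).symm.toLinearMap).comp happ
  have hmv : ∀ {m : ℕ} (A : Matrix (Fin m) (Fin (NG + NL)) ℝ), Continuous fun sg => A *ᵥ Θ sg :=
    fun A => Continuous.matrix_mulVec continuous_const hΘ
  let S : Set (Fin NG → ℝ) := {sg | Feasible C B ξ sl sg (Θ sg)}
  have hS : IsCompact S := by
    refine (isCompact_Icc (a := ξ.2.1) (b := ξ.1)).of_isClosed_subset ?_ ?_
    · have c1 : IsClosed {sg | ∀ h : 0 < NG + NL, Θ sg ⟨0, h⟩ = 0} := by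
        simp only [Set.ofPred_forall]
        exact isClosed_iInter fun h => isClosed_eq ((continuous_apply _).comp hΘ) continuous_const
      have c2 : IsClosed {sg | (C * B * Cᵀ) *ᵥ Θ sg = Fin.append sg (fun j => -(sl j))} :=
        isClosed_eq (hmv _) happ
      have c3 : IsClosed {sg : Fin NG → ℝ | ∀ i, ξ.2.1 i ≤ sg i ∧ sg i ≤ ξ.1 i} := by
        simp only [Set.ofPred_forall, Set.ofPred_and]
        exact isClosed_iInter fun i => (isClosed_le continuous_const (continuous_apply i)).inter
          (isClosed_le (continuous_apply i) continuous_const)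
      have c4 : IsClosed {sg : Fin NG → ℝ | ∀ e, ξ.2.2.2 e ≤ ((B * Cᵀ) *ᵥ Θ sg) e ∧
          ((B * Cᵀ) *ᵥ Θ sg) e ≤ ξ.2.2.1 e} := by
        simp only [Set.ofPred_forall, Set.ofPred_and]
        exact isClosed_iInter fun i =>
          (isClosed_le continuous_const ((continuous_apply i).comp (hmv _))).inter
          (isClosed_le ((continuous_apply i).comp (hmv _)) continuous_const)
      exact c1.inter (c2.inter (c3.inter c4))
    · intro sg h
      exact ⟨fun i => (h.2.2.1 i).1, fun i => (h.2.2.1 i).2⟩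
  have hmem : ∀ sg θ, Feasible C B ξ sl sg θ → sg ∈ S := by
    intro sg θ h
    have := feasible_theta hConn hB z hz0 h
    change Feasible C B ξ sl sg (Θ sg)
    rw [this] at h; exact h
  obtain ⟨sg0, θ0, h0⟩ := hsl
  obtain ⟨sg, hsg, hmin⟩ := hS.exists_isMinOn ⟨sg0, hmem _ _ h0⟩
    (f := fun sg => f ⬝ᵥ sg) (by
      apply Continuous.continuousOn
      exact Continuous.dotProduct continuous_const continuous_id)
  exact ⟨sg, Θ sg, hsg, fun sg' θ' h' => hmin (hmem _ _ h')⟩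

lemma gen_unique (hConn : ConnectedIncidence C) (hB : PosDiag B) (z : Fin (NG + NL))
    (hz0 : (z : ℕ) = 0) (f : Fin NG → ℝ) (hgen : Gen C B f) (ξ : XiT NG E) (sl : Fin NL → ℝ)
    {sg sg' θ θ'} (h : IsOptimal C B f ξ sl sg θ) (h' : IsOptimal C B f ξ sl sg' θ') :
    θ = θ' := by
  classical
  by_contra hne
  let sm := (1/2 : ℝ) • sg + (1/2 : ℝ) • sg'
  let θm := (1/2 : ℝ) • θ + (1/2 : ℝ) • θ'
  have hsm : ∀ i, sm i = (sg i + sg' i) / 2 := fun i => by simp [sm]; ring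
  have hbm : ∀ e, ((B * Cᵀ) *ᵥ θm) e = (((B * Cᵀ) *ᵥ θ) e + ((B * Cᵀ) *ᵥ θ') e) / 2 := fun e => by
    simp [θm, Matrix.mulVec_add, Matrix.mulVec_smul]; ring
  have hcost : f ⬝ᵥ sg = f ⬝ᵥ sg' := le_antisymm (h.2 _ _ h'.1) (h'.2 _ _ h.1)
  have hm : IsOptimal C B f ξ sl sm θm := by
    refine ⟨⟨fun hp => ?_, ?_, fun i => ?_, fun e => ?_⟩, fun s t hst => ?_⟩
    · simp [θm, h.1.1 hp, h'.1.1 hp]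
    · rw [Matrix.mulVec_add, Matrix.mulVec_smul, Matrix.mulVec_smul, h.1.2.1, h'.1.2.1]
      ext j
      refine Fin.addCases (fun i => ?_) (fun k => ?_) j
      · simp [sm]
      · simp; ring
    · have a := h.1.2.2.1 i
      have b := h'.1.2.2.1 i
      rw [hsm]; constructor <;> linarith [a.1, a.2, b.1, b.2]
    · have a := h.1.2.2.2 e
      have b := h'.1.2.2.2 e
      rw [hbm]; constructor <;> linarith [a.1, a.2, b.1, b.2]
    · have a := h.2 _ _ hst
      have : f ⬝ᵥ sm = f ⬝ᵥ sg := by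
        simp only [sm, dotProduct_add, dotProduct_smul, smul_eq_mul, ← hcost]; ring
      rw [this]; exact a
  let SG := Finset.univ.filter fun i => sm i = ξ.1 i ∨ sm i = ξ.2.1 i
  let SB := Finset.univ.filter fun e => ((B * Cᵀ) *ᵥ θm) e = ξ.2.2.1 e ∨
    ((B * Cᵀ) *ᵥ θm) e = ξ.2.2.2 e
  have hL : ∀ j, ((C * B * Cᵀ) *ᵥ (θ - θ')) j =
      Fin.append sg (fun j => -(sl j)) j - Fin.append sg' (fun j => -(sl j)) j := by
    intro j; rw [Matrix.mulVec_sub, h.1.2.1, h'.1.2.1]; rfl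
  have hd : Rmat C B SG SB *ᵥ (θ - θ') = 0 := by
    rw [Rmat_ker_iff SG SB z hz0]
    refine ⟨?_, fun k => ?_, fun i hi => ?_, fun e he => ?_⟩
    · simp [feasible_z z hz0 h.1, feasible_z z hz0 h'.1]
    · rw [hL]; simp
    · rw [hL]; simp only [Fin.append_left]
      have hi := (Finset.mem_filter.1 hi).2
      rw [hsm] at hi
      have a := h.1.2.2.1 i
      have b := h'.1.2.2.1 i
      rcases hi with hi | hi <;> linarith [a.1, a.2, b.1, b.2]
    · rw [Matrix.mulVec_sub, Pi.sub_apply]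
      have hi := (Finset.mem_filter.1 he).2
      rw [hbm] at hi
      have a := h.1.2.2.2 e
      have b := h'.1.2.2.2 e
      rcases hi with hi | hi <;> linarith [a.1, a.2, b.1, b.2]
  obtain ⟨v, hv, hc⟩ := hgen SG SB ⟨θ - θ', sub_ne_zero.2 hne, hd⟩
  obtain ⟨k1, k2, k3, k4⟩ := (Rmat_ker_iff SG SB z hz0 v).1 hv
  apply hc
  have mG : ∀ i, sm i = ξ.1 i ∨ sm i = ξ.2.1 i → gpart C B v i = 0 := fun i hi =>
    k3 i (Finset.mem_filter.2 ⟨Finset.mem_univ _, hi⟩)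
  have mB : ∀ e, ((B * Cᵀ) *ᵥ θm) e = ξ.2.2.1 e ∨ ((B * Cᵀ) *ᵥ θm) e = ξ.2.2.2 e →
      ((B * Cᵀ) *ᵥ v) e = 0 := fun i hi =>
    k4 i (Finset.mem_filter.2 ⟨Finset.mem_univ _, hi⟩)
  have p1 := opt_dir z hz0 hm v k1 k2 (fun i hi => (mG i (Or.inl hi)).le)
    (fun i hi => (mG i (Or.inr hi)).ge) (fun i hi => (mB i (Or.inl hi)).le)
    (fun i hi => (mB i (Or.inr hi)).ge)
  have mG' : ∀ i, sm i = ξ.1 i ∨ sm i = ξ.2.1 i → gpart C B (-v) i = 0 := fun i hi => by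
    have := mG i hi
    unfold gpart at *
    rw [Matrix.mulVec_neg, Pi.neg_apply, this, neg_zero]
  have mB' : ∀ e, ((B * Cᵀ) *ᵥ θm) e = ξ.2.2.1 e ∨ ((B * Cᵀ) *ᵥ θm) e = ξ.2.2.2 e →
      ((B * Cᵀ) *ᵥ (-v)) e = 0 := fun i hi => by
    rw [Matrix.mulVec_neg, Pi.neg_apply, mB i hi, neg_zero]
  have p2 := opt_dir z hz0 hm (-v) (by simp [k1]) (by intro k; simp [Matrix.mulVec_neg, k2])
    (fun i hi => (mG' i (Or.inl hi)).le)
    (fun i hi => (mG' i (Or.inr hi)).ge) (fun i hi => (mB' i (Or.inl hi)).le)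
    (fun i hi => (mB' i (Or.inr hi)).ge)
  rw [gcost_neg] at p2
  linarith

lemma opt_sg_of_theta {f : Fin NG → ℝ} {ξ : XiT NG E} {sl : Fin NL → ℝ}
    {sg sg' θ} (h : Feasible C B ξ sl sg θ) (h' : Feasible C B ξ sl sg' θ) : sg = sg' := by
  have := h.2.1.symm.trans h'.2.1
  ext i
  have := congrFun this (Fin.castAdd NL i)
  simpa using this

lemma Rmat_exists_ker (SG : Finset (Fin NG)) (SB : Finset (Fin E))
    (hc : SG.card + SB.card < NG - 1) : ∃ v ≠ 0, Rmat C B SG SB *ᵥ v = 0 := by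
  have h : LinearMap.ker (Rmat C B SG SB).mulVecLin ≠ ⊥ := by
    apply LinearMap.ker_ne_bot_of_finrank_lt
    simp
    omega
  obtain ⟨v, hv, h0⟩ := (Submodule.ne_bot_iff _).1 h
  exact ⟨v, h0, hv⟩

lemma Mmat_mulVec_dot (z : Fin (NG + NL)) (hz0 : (z : ℕ) = 0) (τ : Fin (NG + NL + 1) → ℝ)
    (v : Fin (NG + NL) → ℝ) : ((Mmat C B)ᵀ *ᵥ τ) ⬝ᵥ v =
      ∑ i : Fin (NG + NL), τ i.castSucc * ((C * B * Cᵀ) *ᵥ v) i + τ (Fin.last _) * v z := by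
  rw [Matrix.mulVec_transpose, ← Matrix.dotProduct_mulVec]
  unfold dotProduct
  rw [Fin.sum_univ_castSucc]
  congr 1
  · refine Finset.sum_congr rfl fun i _ => ?_
    congr 1
    unfold Matrix.mulVec dotProduct
    refine Finset.sum_congr rfl fun j _ => ?_
    simp [Mmat]
  · congr 1
    rw [← e1_dot z hz0 v]
    unfold Matrix.mulVec dotProduct
    refine Finset.sum_congr rfl fun j _ => ?_
    simp [Mmat]

lemma gen_kkt (hB : PosDiag B) (z : Fin (NG + NL))
    (hz0 : (z : ℕ) = 0) (f : Fin NG → ℝ) (hgen : Gen C B f) (ξ : XiT NG E) (sl : Fin NL → ℝ)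
    {sg θ τ μp μm lp lm} (h : IsKKT C B f ξ sl sg θ τ μp μm lp lm) :
    NG - 1 ≤ nnz μp + nnz μm + nnz lp + nnz lm := by
  classical
  by_contra hlt
  push Not at hlt
  let F : ∀ {n : ℕ}, (Fin n → ℝ) → Finset (Fin n) := fun v => Finset.univ.filter fun i => v i ≠ 0
  have hF : ∀ {n : ℕ} (v : Fin n → ℝ), (F v).card = nnz v := by
    intro n v
    unfold nnz
    rw [← Set.ncard_coe_finset]
    congr 1; ext i; simp [F]
  have hF0 : ∀ {n : ℕ} (v w : Fin n → ℝ) i, i ∉ F v ∪ F w → v i = 0 ∧ w i = 0 := by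
    intro n v w i hi
    simpa [F] using hi
  have hcard : (F lp ∪ F lm).card + (F μp ∪ F μm).card < NG - 1 := by
    have a := Finset.card_union_le (F lp) (F lm)
    have b := Finset.card_union_le (F μp) (F μm)
    simp only [hF] at a b
    omega
  obtain ⟨v, hv, hc⟩ := hgen _ _ (Rmat_exists_ker (C := C) (B := B) _ _ hcard)
  apply hc
  obtain ⟨k1, k2, k3, k4⟩ := (Rmat_ker_iff _ _ z hz0 v).1 hv
  obtain ⟨-, hst, hf, -⟩ := h
  have h1 : ((Mmat C B)ᵀ *ᵥ τ + (C * B) *ᵥ (μp - μm)) ⬝ᵥ v = 0 := by rw [hst, zero_dotProduct]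
  rw [add_dotProduct, Mmat_mulVec_dot z hz0, k1, mul_zero, add_zero, Fin.sum_univ_add] at h1
  simp only [k2, mul_zero, Finset.sum_const_zero, add_zero] at h1
  have h2 : ((C * B) *ᵥ (μp - μm)) ⬝ᵥ v = 0 := by
    rw [dotProduct_comm, Matrix.dotProduct_mulVec, ← Matrix.mulVec_transpose, Matrix.transpose_mul,
      posDiag_transpose hB]
    unfold dotProduct
    refine Finset.sum_eq_zero fun e _ => ?_
    by_cases he : e ∈ F μp ∪ F μm
    · rw [k4 e he, zero_mul]
    · obtain ⟨a, b⟩ := hF0 _ _ _ he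
      simp [a, b]
  rw [h2, add_zero] at h1
  rw [← h1]
  unfold gcost
  refine Finset.sum_congr rfl fun i _ => ?_
  by_cases hi : i ∈ F lp ∪ F lm
  · rw [k3 i hi, mul_zero, mul_zero]
  · obtain ⟨a, b⟩ := hF0 _ _ _ hi
    have := hf i
    rw [a, b] at this
    have h3 : f i = τ (Fin.castLE (by omega) i) := by linarith
    rw [h3]; rfl

lemma gen_mem_omegaF (hNG : 0 < NG) (hConn : ConnectedIncidence C) (hB : PosDiag B)
    (f : Fin NG → ℝ) (hf : ∀ i, 0 ≤ f i) (hgen : Gen C B f) : f ∈ OmegaF C B := by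
  have hz0 : ((⟨0, by omega⟩ : Fin (NG + NL)) : ℕ) = 0 := rfl
  refine ⟨hf, fun ξ _ sl hsl => ⟨?_, fun sg θ τ μp μm lp lm h => gen_kkt hB _ hz0 f hgen ξ sl h⟩⟩
  obtain ⟨sg, θ, h⟩ := exists_opt hConn hB _ hz0 f ξ sl hsl.2
  refine ⟨(sg, θ), h, ?_⟩
  rintro ⟨sg', θ'⟩ h'
  have e1 : θ' = θ := gen_unique hConn hB _ hz0 f hgen ξ sl h' h
  simp only at h'
  subst e1
  rw [opt_sg_of_theta (f := f) h'.1 h.1]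

lemma perp_bij (hNG : 0 < NG) (SG : Finset (Fin NG)) (SB : Finset (Fin E))
    (hc : SG.card + SB.card = NG - 1) (hP : Perp C B SG SB) :
    Function.Bijective (Rmat C B SG SB).mulVec := by
  set z : Fin (NG + NL) := ⟨0, by omega⟩ with hz
  have hz0 : (z : ℕ) = 0 := rfl
  have hinj : Function.Injective (Rmat C B SG SB).mulVecLin := by
    rw [← LinearMap.ker_eq_bot, LinearMap.ker_eq_bot']
    intro v hv
    obtain ⟨k1, k2, k3, k4⟩ := (Rmat_ker_iff SG SB z hz0 v).1 hv
    have hspan := hP.span_eq_top_of_card_eq_finrank' (by simp; omega)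
    let φ : ((Fin NG → ℝ) × (Fin (NG + NL) → ℝ)) →ₗ[ℝ] ℝ :=
      { toFun := fun p => p.1 ⬝ᵥ gpart C B v + p.2 ⬝ᵥ v
        map_add' := by intro p q; simp [add_dotProduct]; ring
        map_smul' := by intro c p; simp [smul_dotProduct]; ring }
    have hφ : φ = 0 := by
      refine LinearMap.ext_on_range hspan ?_
      rintro ((u | i) | (g | e))
      · change (0 : Fin NG → ℝ) ⬝ᵥ _ + (fun j : Fin (NG + NL) => if (j : ℕ) = 0 then (1 : ℝ) else 0) ⬝ᵥ v = 0
        rw [e1_dot z hz0, k1, zero_dotProduct, add_zero]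
      · change (fun k : Fin NG => if (k : ℕ) = (i : ℕ) then (-1 : ℝ) else 0) ⬝ᵥ gpart C B v +
          ((C * B * Cᵀ) *ᵥ v) i = 0
        refine Fin.addCases (fun i => ?_) (fun k => ?_) i
        · unfold dotProduct
          rw [Finset.sum_eq_single i]
          · simp [gpart]
          · intro j _ hj
            have : (j : ℕ) ≠ (i : ℕ) := fun h => hj (Fin.ext h)
            simp [this]
          · simp
        · rw [k2, add_zero]
          unfold dotProduct
          refine Finset.sum_eq_zero fun j _ => ?_
          have : (j : ℕ) ≠ NG + (k : ℕ) := by have := j.2; omega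
          simp [this]
      · change (Pi.single (g : Fin NG) 1 : Fin NG → ℝ) ⬝ᵥ gpart C B v +
          (0 : Fin (NG + NL) → ℝ) ⬝ᵥ v = 0
        rw [zero_dotProduct, single_dotProduct, add_zero, one_mul]
        exact k3 g g.2
      · change (0 : Fin NG → ℝ) ⬝ᵥ _ + ((B * Cᵀ) *ᵥ v) e = 0
        rw [zero_dotProduct, zero_add]
        exact k4 e e.2
    have := congrArg (fun ψ => ψ ((0 : Fin NG → ℝ), v)) hφ
    simp only [φ, LinearMap.coe_mk, AddHom.coe_mk, zero_dotProduct, zero_add,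
      LinearMap.zero_apply] at this
    exact dotProduct_self_eq_zero.1 this
  exact ⟨hinj, (LinearMap.injective_iff_surjective_of_finrank_eq_finrank
    (by simp; omega)).1 hinj⟩

/-- `R` as a linear equivalence. -/
def Re (SG : Finset (Fin NG)) (SB : Finset (Fin E))
    (hb : Function.Bijective (Rmat C B SG SB).mulVec) :
    (Fin (NG + NL) → ℝ) ≃ₗ[ℝ] ((Fin NL ⊕ (↥SG ⊕ ↥SB)) ⊕ Unit → ℝ) :=
  LinearEquiv.ofBijective (Rmat C B SG SB).mulVecLin hb

lemma Re_apply (SG : Finset (Fin NG)) (SB : Finset (Fin E))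
    (hb : Function.Bijective (Rmat C B SG SB).mulVec) (v) :
    Re SG SB hb v = Rmat C B SG SB *ᵥ v := rfl

lemma Rmat_Re_symm (SG : Finset (Fin NG)) (SB : Finset (Fin E))
    (hb : Function.Bijective (Rmat C B SG SB).mulVec) (y) :
    Rmat C B SG SB *ᵥ ((Re SG SB hb).symm y) = y := (Re SG SB hb).apply_symm_apply y

/-- dual direction -/
def Dv (SG : Finset (Fin NG)) (SB : Finset (Fin E))
    (hb : Function.Bijective (Rmat C B SG SB).mulVec) (c : (Fin NL ⊕ (↥SG ⊕ ↥SB)) ⊕ Unit) :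
    Fin (NG + NL) → ℝ := by
  classical
  exact (Re SG SB hb).symm (Pi.single c 1)

/-- `gcost` as a linear map -/
def gcostL (C : Matrix (Fin (NG + NL)) (Fin E) ℝ) (B : Matrix (Fin E) (Fin E) ℝ)
    (f : Fin NG → ℝ) : (Fin (NG + NL) → ℝ) →ₗ[ℝ] ℝ where
  toFun := gcost C B f
  map_add' x y := by simp [gcost, Matrix.mulVec_add, mul_add, Finset.sum_add_distrib]
  map_smul' c x := by rw [gcost_smul]; rfl

lemma gcost_expand (SG : Finset (Fin NG)) (SB : Finset (Fin E))
    (hb : Function.Bijective (Rmat C B SG SB).mulVec) (f : Fin NG → ℝ)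
    (z : Fin (NG + NL)) (hz0 : (z : ℕ) = 0) (v : Fin (NG + NL) → ℝ)
    (hz : v z = 0) (hl : ∀ k, ((C * B * Cᵀ) *ᵥ v) (Fin.natAdd NG k) = 0) :
    gcost C B f v =
      ∑ g : SG, gpart C B v g * gcost C B f (Dv SG SB hb (Sum.inl (Sum.inr (Sum.inl g)))) +
      ∑ e : SB, ((B * Cᵀ) *ᵥ v) e * gcost C B f (Dv SG SB hb (Sum.inl (Sum.inr (Sum.inr e)))) := by
  classical
  have h := LinearMap.pi_apply_eq_sum_univ ((gcostL C B f).comp (Re SG SB hb).symm.toLinearMap)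
    (Re SG SB hb v)
  have h0 : ((gcostL C B f).comp (Re SG SB hb).symm.toLinearMap) (Re SG SB hb v) =
    gcost C B f v := by
    simp [gcostL]
    rfl
  rw [h0] at h
  rw [h]
  have hD : ∀ c, ((gcostL C B f).comp (Re SG SB hb).symm.toLinearMap)
      (fun j => if c = j then 1 else 0) = gcost C B f (Dv SG SB hb c) := by
    intro c
    have : (fun j => if c = j then (1 : ℝ) else 0) = Pi.single c 1 := by
      ext j; by_cases h : c = j
      · subst h; simp
      · rw [if_neg h, Pi.single_eq_of_ne (Ne.symm h)]
    rw [this]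
    simp only [Dv, gcostL, LinearMap.comp_apply, LinearMap.coe_mk, AddHom.coe_mk]
    congr!
  simp only [hD, Re_apply, Fintype.sum_sum_type, Rmat_load, Rmat_gen, Rmat_br,
    Rmat_ref SG SB z hz0, hz, hl, smul_eq_mul, zero_mul, Finset.sum_const_zero, add_zero, zero_add]
  rfl

/-- Sign conditions at the binding constraints. -/
def SignOK (f : Fin NG → ℝ) (ξ : XiT NG E) (SG : Finset (Fin NG)) (SB : Finset (Fin E))
    (hb : Function.Bijective (Rmat C B SG SB).mulVec) (sg : Fin NG → ℝ)
    (θ : Fin (NG + NL) → ℝ) : Prop :=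
  (∀ g : SG, (sg g = ξ.2.1 g ∧ 0 ≤ gcost C B f (Dv SG SB hb (Sum.inl (Sum.inr (Sum.inl g))))) ∨
    (sg g = ξ.1 g ∧ gcost C B f (Dv SG SB hb (Sum.inl (Sum.inr (Sum.inl g)))) ≤ 0)) ∧
  (∀ e : SB, (((B * Cᵀ) *ᵥ θ) e = ξ.2.2.2 e ∧
      0 ≤ gcost C B f (Dv SG SB hb (Sum.inl (Sum.inr (Sum.inr e))))) ∨
    (((B * Cᵀ) *ᵥ θ) e = ξ.2.2.1 e ∧
      gcost C B f (Dv SG SB hb (Sum.inl (Sum.inr (Sum.inr e)))) ≤ 0))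

lemma opt_of_sign (z : Fin (NG + NL)) (hz0 : (z : ℕ) = 0) {f : Fin NG → ℝ} {ξ : XiT NG E}
    {sl : Fin NL → ℝ} {SG : Finset (Fin NG)} {SB : Finset (Fin E)}
    {hb : Function.Bijective (Rmat C B SG SB).mulVec} {sg : Fin NG → ℝ}
    {θ : Fin (NG + NL) → ℝ} (hfeas : Feasible C B ξ sl sg θ) (hs : SignOK f ξ SG SB hb sg θ) :
    IsOptimal C B f ξ sl sg θ := by
  refine ⟨hfeas, fun sg' θ' h' => ?_⟩
  have hL : ∀ j, ((C * B * Cᵀ) *ᵥ (θ' - θ)) j =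
      Fin.append sg' (fun j => -(sl j)) j - Fin.append sg (fun j => -(sl j)) j := by
    intro j; rw [Matrix.mulVec_sub, hfeas.2.1, h'.2.1]; rfl
  have hgp : gpart C B (θ' - θ) = sg' - sg := by
    ext i; simp [gpart, hL]
  have key := gcost_expand SG SB hb f z hz0 (θ' - θ)
    (by simp [feasible_z z hz0 hfeas, feasible_z z hz0 h']) (by intro k; rw [hL]; simp)
  have hnn : 0 ≤ gcost C B f (θ' - θ) := by
    rw [key]
    refine add_nonneg (Finset.sum_nonneg fun g _ => ?_) (Finset.sum_nonneg fun e _ => ?_)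
    · rw [hgp, Pi.sub_apply]
      have a := h'.2.2.1 g
      rcases hs.1 g with ⟨h1, h2⟩ | ⟨h1, h2⟩
      · exact mul_nonneg (by linarith [a.1]) h2
      · exact mul_nonneg_of_nonpos_of_nonpos (by linarith [a.2]) h2
    · rw [Matrix.mulVec_sub, Pi.sub_apply]
      have a := h'.2.2.2 e
      rcases hs.2 e with ⟨h1, h2⟩ | ⟨h1, h2⟩
      · exact mul_nonneg (by linarith [a.1]) h2
      · exact mul_nonneg_of_nonpos_of_nonpos (by linarith [a.2]) h2
  rw [gcost_eq, hgp, dotProduct_sub] at hnn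
  linarith

lemma OPFmap_eq {f : Fin NG → ℝ} (hf : f ∈ OmegaF C B) {ξ : XiT NG E} (hξ : ξ ∈ OmegaXi C B)
    {sl : Fin NL → ℝ} (hsl : sl ∈ OmegaSl C B ξ) {sg θ} (h : IsOptimal C B f ξ sl sg θ) :
    OPFmap C B f ξ sl = sg := by
  have hex : ∃ p : (Fin NG → ℝ) × (Fin (NG + NL) → ℝ), IsOptimal C B f ξ sl p.1 p.2 :=
    ⟨(sg, θ), h⟩
  have hu := (hf.2 ξ hξ sl hsl).1
  have := hu.unique hex.choose_spec (y₂ := (sg, θ)) h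
  unfold OPFmap
  rw [dif_pos hex, this]

lemma padSl_add (SG : Finset (Fin NG)) (SB : Finset (Fin E)) (v w : Fin NL → ℝ) :
    padSl SG SB (v + w) = padSl SG SB v + padSl SG SB w := by
  ext c; rcases c with (k | g) | u <;> simp [padSl]

lemma padSl_smul (SG : Finset (Fin NG)) (SB : Finset (Fin E)) (c : ℝ) (v : Fin NL → ℝ) :
    padSl SG SB (c • v) = c • padSl SG SB v := by
  ext c; rcases c with (k | g) | u <;> simp [padSl]

/-- The voltage response to a load change. -/
def deltaL (SG : Finset (Fin NG)) (SB : Finset (Fin E))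
    (hb : Function.Bijective (Rmat C B SG SB).mulVec) :
    (Fin NL → ℝ) →ₗ[ℝ] (Fin (NG + NL) → ℝ) where
  toFun w := -((Re SG SB hb).symm (padSl SG SB w))
  map_add' v w := by rw [padSl_add, map_add, neg_add]
  map_smul' c v := by rw [padSl_smul, map_smul, smul_neg]; rfl

lemma Rmat_delta (SG : Finset (Fin NG)) (SB : Finset (Fin E))
    (hb : Function.Bijective (Rmat C B SG SB).mulVec) (w) :
    Rmat C B SG SB *ᵥ (deltaL SG SB hb w) = - padSl SG SB w := by
  change Rmat C B SG SB *ᵥ (-_) = _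
  rw [Matrix.mulVec_neg, Rmat_Re_symm]

lemma JFun_eq (SG : Finset (Fin NG)) (SB : Finset (Fin E))
    (hb : Function.Bijective (Rmat C B SG SB).mulVec) (w) :
    JFun C B SG SB w = gpart C B (deltaL SG SB hb w) := by
  have h : Function.invFun (Rmat C B SG SB).mulVec (padSl SG SB w) =
      (Re SG SB hb).symm (padSl SG SB w) := by
    apply hb.1
    rw [Function.rightInverse_invFun hb.2, Rmat_Re_symm]
  ext i
  simp only [JFun, h, gpart, deltaL, LinearMap.coe_mk, AddHom.coe_mk, Matrix.mulVec_neg,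
    Pi.neg_apply]

lemma Jmatrix_mulVec (SG : Finset (Fin NG)) (SB : Finset (Fin E))
    (hb : Function.Bijective (Rmat C B SG SB).mulVec) (w : Fin NL → ℝ) :
    Jmatrix C B SG SB *ᵥ w = gpart C B (deltaL SG SB hb w) := by
  let G : (Fin NL → ℝ) →ₗ[ℝ] (Fin NG → ℝ) :=
    { toFun := fun w => gpart C B (deltaL SG SB hb w)
      map_add' := by intro x y; ext i; simp [gpart, Matrix.mulVec_add]
      map_smul' := by intro c x; ext i; simp [gpart, Matrix.mulVec_smul] }
  have : Jmatrix C B SG SB = LinearMap.toMatrix' G := by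
    ext i j
    rw [LinearMap.toMatrix'_apply]
    change JFun C B SG SB (Pi.single j 1) i = gpart C B (deltaL SG SB hb _) i
    rw [JFun_eq SG SB hb]
  rw [this, LinearMap.toMatrix'_mulVec]
  rfl

lemma stable (z : Fin (NG + NL)) (hz0 : (z : ℕ) = 0) {f : Fin NG → ℝ} (hf : f ∈ OmegaF C B)
    {ξ : XiT NG E} (hξ : ξ ∈ OmegaXi C B)
    {sl : Fin NL → ℝ} (hpos : ∀ j, 0 < sl j) {SG : Finset (Fin NG)} {SB : Finset (Fin E)}
    {hb : Function.Bijective (Rmat C B SG SB).mulVec} {sg : Fin NG → ℝ}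
    {θ : Fin (NG + NL) → ℝ} (hfeas : Feasible C B ξ sl sg θ) (hs : SignOK f ξ SG SB hb sg θ)
    (hG : ∀ i ∉ SG, ξ.2.1 i < sg i ∧ sg i < ξ.1 i)
    (hBr : ∀ e ∉ SB, ξ.2.2.2 e < ((B * Cᵀ) *ᵥ θ) e ∧ ((B * Cᵀ) *ᵥ θ) e < ξ.2.2.1 e) :
    ∀ᶠ sl' in nhds sl, sl' ∈ OmegaSl C B ξ ∧
      OPFmap C B f ξ sl' = sg + Jmatrix C B SG SB *ᵥ (sl' - sl) := by
  have hδ : Continuous (deltaL SG SB hb) := LinearMap.continuous_of_finiteDimensional _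
  have hδ' : Continuous fun sl' => deltaL SG SB hb (sl' - sl) :=
    hδ.comp (continuous_id.sub continuous_const)
  have cG : ∀ i, Continuous fun sl' => sg i + gpart C B (deltaL SG SB hb (sl' - sl)) i := fun i =>
    continuous_const.add ((continuous_apply _).comp (Continuous.matrix_mulVec continuous_const hδ'))
  have cB : ∀ e, Continuous fun sl' => ((B * Cᵀ) *ᵥ θ) e +
      ((B * Cᵀ) *ᵥ (deltaL SG SB hb (sl' - sl))) e := fun e =>
    continuous_const.add ((continuous_apply _).comp (Continuous.matrix_mulVec continuous_const hδ'))
  have z1 : ∀ i, sg i + gpart C B (deltaL SG SB hb (sl - sl)) i = sg i := by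
    intro i; simp [gpart]
  have z2 : ∀ e, ((B * Cᵀ) *ᵥ θ) e + ((B * Cᵀ) *ᵥ (deltaL SG SB hb (sl - sl))) e =
      ((B * Cᵀ) *ᵥ θ) e := by
    intro i; simp
  have e1 : ∀ᶠ sl' in nhds sl, ∀ j, 0 < sl' j :=
    Filter.eventually_all.2 fun j =>
      (continuous_apply j).continuousAt.eventually (lt_mem_nhds (hpos j))
  have e2 : ∀ᶠ sl' in nhds sl, ∀ i, i ∉ SG →
      (ξ.2.1 i < sg i + gpart C B (deltaL SG SB hb (sl' - sl)) i ∧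
      sg i + gpart C B (deltaL SG SB hb (sl' - sl)) i < ξ.1 i) :=
    Filter.eventually_all.2 fun i => by
      by_cases hi : i ∈ SG
      · exact Filter.Eventually.of_forall fun _ h => absurd hi h
      · have h1 := ((cG i).tendsto sl).eventually (lt_mem_nhds (by simp only [z1]; exact (hG i hi).1))
        have h2 := ((cG i).tendsto sl).eventually (gt_mem_nhds (by simp only [z1]; exact (hG i hi).2))
        filter_upwards [h1, h2] with x a b _ using ⟨a, b⟩
  have e3 : ∀ᶠ sl' in nhds sl, ∀ e, e ∉ SB →
      (ξ.2.2.2 e < ((B * Cᵀ) *ᵥ θ) e + ((B * Cᵀ) *ᵥ (deltaL SG SB hb (sl' - sl))) e ∧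
      ((B * Cᵀ) *ᵥ θ) e + ((B * Cᵀ) *ᵥ (deltaL SG SB hb (sl' - sl))) e < ξ.2.2.1 e) :=
    Filter.eventually_all.2 fun i => by
      by_cases hi : i ∈ SB
      · exact Filter.Eventually.of_forall fun _ h => absurd hi h
      · have h1 := ((cB i).tendsto sl).eventually (lt_mem_nhds (by simp only [z2]; exact (hBr i hi).1))
        have h2 := ((cB i).tendsto sl).eventually (gt_mem_nhds (by simp only [z2]; exact (hBr i hi).2))
        filter_upwards [h1, h2] with x a b _ using ⟨a, b⟩
  filter_upwards [e1, e2, e3] with sl' g1 g2 g3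
  have hR := Rmat_delta SG SB hb (sl' - sl)
  set δ := deltaL SG SB hb (sl' - sl) with hδdef
  have r1 : δ z = 0 := by
    rw [← Rmat_ref (C := C) (B := B) SG SB z hz0 δ (), hR]; simp [padSl]
  have r2 : ∀ k, ((C * B * Cᵀ) *ᵥ δ) (Fin.natAdd NG k) = - (sl' - sl) k := by
    intro k; rw [← Rmat_load SG SB, hR]; simp [padSl]
  have r3 : ∀ i ∈ SG, gpart C B δ i = 0 := by
    intro i hi
    have := Rmat_gen (C := C) (B := B) SG SB δ ⟨i, hi⟩
    rw [hR] at this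
    simpa [padSl, gpart] using this.symm
  have r4 : ∀ i ∈ SB, ((B * Cᵀ) *ᵥ δ) i = 0 := by
    intro i hi
    have := Rmat_br (C := C) (B := B) SG SB δ ⟨i, hi⟩
    rw [hR] at this
    simpa [padSl] using this.symm
  have hF : Feasible C B ξ sl' (sg + gpart C B δ) (θ + δ) := by
    refine ⟨fun h => ?_, ?_, fun i => ?_, fun e => ?_⟩
    · have : (⟨0, h⟩ : Fin (NG + NL)) = z := Fin.ext hz0.symm
      rw [this, Pi.add_apply, r1, feasible_z z hz0 hfeas, add_zero]
    · have := balance_add hfeas.2.1 (sl' - sl) r2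
      rw [add_sub_cancel] at this
      exact this
    · by_cases hi : i ∈ SG
      · rw [Pi.add_apply, r3 i hi, add_zero]; exact hfeas.2.2.1 i
      · exact ⟨(g2 i hi).1.le, (g2 i hi).2.le⟩
    · rw [Matrix.mulVec_add, Pi.add_apply]
      by_cases hi : e ∈ SB
      · rw [r4 e hi, add_zero]; exact hfeas.2.2.2 e
      · exact ⟨(g3 e hi).1.le, (g3 e hi).2.le⟩
  have hs' : SignOK f ξ SG SB hb (sg + gpart C B δ) (θ + δ) := by
    refine ⟨fun g => ?_, fun e => ?_⟩
    · rw [Pi.add_apply, r3 g g.2, add_zero]; exact hs.1 g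
    · rw [Matrix.mulVec_add, Pi.add_apply, r4 e e.2, add_zero]; exact hs.2 e
  have hmem : sl' ∈ OmegaSl C B ξ := ⟨g1, _, _, hF⟩
  refine ⟨hmem, ?_⟩
  rw [OPFmap_eq hf hξ hmem (opt_of_sign z hz0 hF hs'), Jmatrix_mulVec SG SB hb]

lemma stable_deriv {f : Fin NG → ℝ} {ξ : XiT NG E} {sl : Fin NL → ℝ} {sg : Fin NG → ℝ}
    {J : Matrix (Fin NG) (Fin NL) ℝ}
    (h : ∀ᶠ sl' in nhds sl, sl' ∈ OmegaSl C B ξ ∧ OPFmap C B f ξ sl' = sg + J *ᵥ (sl' - sl)) :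
    HasFDerivAt (OPFmap C B f ξ) (LinearMap.toContinuousLinearMap (Matrix.mulVecLin J)) sl := by
  have h1 : HasFDerivAt (fun sl' => sg +
      (LinearMap.toContinuousLinearMap (Matrix.mulVecLin J)) (sl' - sl))
      (LinearMap.toContinuousLinearMap (Matrix.mulVecLin J)) sl :=
    (((LinearMap.toContinuousLinearMap (Matrix.mulVecLin J)).hasFDerivAt).comp sl
      ((hasFDerivAt_id sl).sub_const sl)).const_add sg
  refine h1.congr_of_eventuallyEq ?_
  filter_upwards [h] with x hx
  rw [hx.2]; rfl

lemma li_transfer {ι ι' V : Type*} [AddCommGroup V] [Module ℝ V] {w : ι → V} {w' : ι' → V}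
    (σ : ι' → ι) (hσ : Function.Injective σ) (h : ∀ j, w' j = w (σ j) ∨ w' j = - w (σ j))
    (hw : LinearIndependent ℝ w) : LinearIndependent ℝ w' := by
  classical
  have h1 := (hw.comp σ hσ).units_smul (fun j => if w' j = w (σ j) then 1 else -1)
  convert! h1 using 1
  ext j
  simp only [Pi.smul_apply', Function.comp_apply]
  by_cases hj : w' j = w (σ j)
  · simp [hj]
  · rw [if_neg hj, (h j).resolve_left hj, Units.neg_smul, one_smul]

lemma perp_of_full {ξ : XiT NG E} {sg : Fin NG → ℝ} {θ : Fin (NG + NL) → ℝ}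
    {SG : Finset (Fin NG)} {SB : Finset (Fin E)}
    (hSG : ∀ i, i ∈ SG ↔ sg i = ξ.1 i ∨ sg i = ξ.2.1 i)
    (hSB : ∀ e, e ∈ SB ↔ ((B * Cᵀ) *ᵥ θ) e = ξ.2.2.1 e ∨ ((B * Cᵀ) *ᵥ θ) e = ξ.2.2.2 e)
    (h : LinearIndependent ℝ (fullGrad C B ξ sg θ)) : Perp C B SG SB := by
  classical
  have hG : ∀ g : SG, ∃ c : BindingIdx C B ξ sg θ,
      c.1 = Sum.inl g.1 ∨ c.1 = Sum.inr (Sum.inl g.1) := by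
    intro g
    rcases (hSG g).1 g.2 with h | h
    · exact ⟨⟨Sum.inl g.1, h⟩, Or.inl rfl⟩
    · exact ⟨⟨Sum.inr (Sum.inl g.1), h⟩, Or.inr rfl⟩
  have hE : ∀ e : SB, ∃ c : BindingIdx C B ξ sg θ,
      c.1 = Sum.inr (Sum.inr (Sum.inl e.1)) ∨ c.1 = Sum.inr (Sum.inr (Sum.inr e.1)) := by
    intro g
    rcases (hSB g).1 g.2 with h | h
    · exact ⟨⟨Sum.inr (Sum.inr (Sum.inl g.1)), h⟩, Or.inl rfl⟩
    · exact ⟨⟨Sum.inr (Sum.inr (Sum.inr g.1)), h⟩, Or.inr rfl⟩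
  choose cG hcG using hG
  choose cE hcE using hE
  let σ : (Unit ⊕ Fin (NG + NL)) ⊕ (↥SG ⊕ ↥SB) →
      (Unit ⊕ Fin (NG + NL)) ⊕ ↥(BindingIdx C B ξ sg θ) :=
    Sum.map id (Sum.elim cG cE)
  refine li_transfer σ ?_ ?_ h
  · apply Function.Injective.sumMap Function.injective_id
    apply Function.Injective.sumElim
    · intro a b hab
      apply Subtype.ext
      have h1 := hcG a
      have h2 := hcG b
      rw [hab] at h1
      rcases h1 with h1 | h1 <;> rcases h2 with h2 | h2 <;> rw [h1] at h2 <;> simp_all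
    · intro a b hab
      apply Subtype.ext
      have h1 := hcE a
      have h2 := hcE b
      rw [hab] at h1
      rcases h1 with h1 | h1 <;> rcases h2 with h2 | h2 <;> rw [h1] at h2 <;> simp_all
    · intro a b hab
      have h1 := hcG a
      have h2 := hcE b
      rw [hab] at h1
      rcases h1 with h1 | h1 <;> rcases h2 with h2 | h2 <;> rw [h1] at h2 <;> simp_all
  · rintro (j | g | e)
    · exact Or.inl rfl
    · change ((Pi.single (g : Fin NG) 1 : Fin NG → ℝ), (0 : Fin (NG + NL) → ℝ)) =
        ineqGrad C B (cG g).1 ∨ ((Pi.single (g : Fin NG) 1 : Fin NG → ℝ),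
          (0 : Fin (NG + NL) → ℝ)) = - ineqGrad C B (cG g).1
      rcases hcG g with h | h
      · left; rw [h]; rfl
      · right; rw [h]; simp [ineqGrad]
    · change ((0 : Fin NG → ℝ), fun j => (B * Cᵀ) (e : Fin E) j) =
        ineqGrad C B (cE e).1 ∨ ((0 : Fin NG → ℝ), fun j => (B * Cᵀ) (e : Fin E) j) =
          - ineqGrad C B (cE e).1
      rcases hcE e with h | h
      · left; rw [h]; rfl
      · right; rw [h]; ext <;> simp [ineqGrad]

lemma full_of_perp {ξ : XiT NG E} {sg : Fin NG → ℝ} {θ : Fin (NG + NL) → ℝ}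
    {SG : Finset (Fin NG)} {SB : Finset (Fin E)}
    (hs : ∀ i, ξ.2.1 i < ξ.1 i) (hp : ∀ e, ξ.2.2.2 e < ξ.2.2.1 e)
    (hSG : ∀ i, i ∈ SG ↔ sg i = ξ.1 i ∨ sg i = ξ.2.1 i)
    (hSB : ∀ e, e ∈ SB ↔ ((B * Cᵀ) *ᵥ θ) e = ξ.2.2.1 e ∨ ((B * Cᵀ) *ᵥ θ) e = ξ.2.2.2 e)
    (h : Perp C B SG SB) : LinearIndependent ℝ (fullGrad C B ξ sg θ) := by
  classical
  let ρ : ↥(BindingIdx C B ξ sg θ) → ↥SG ⊕ ↥SB := fun c => match c with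
    | ⟨Sum.inl i, hc⟩ => Sum.inl ⟨i, (hSG i).2 (Or.inl hc)⟩
    | ⟨Sum.inr (Sum.inl i), hc⟩ => Sum.inl ⟨i, (hSG i).2 (Or.inr hc)⟩
    | ⟨Sum.inr (Sum.inr (Sum.inl e)), hc⟩ => Sum.inr ⟨e, (hSB e).2 (Or.inl hc)⟩
    | ⟨Sum.inr (Sum.inr (Sum.inr e)), hc⟩ => Sum.inr ⟨e, (hSB e).2 (Or.inr hc)⟩
  refine li_transfer (Sum.map id ρ) ?_ ?_ h
  · apply Function.Injective.sumMap Function.injective_id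
    rintro ⟨(i | i | e | e), hc⟩ ⟨(i' | i' | e' | e'), hc'⟩ hh <;>
      simp only [ρ, Sum.inl.injEq, Sum.inr.injEq, Subtype.mk.injEq, reduceCtorEq] at hh <;>
      subst hh <;> first | rfl | skip
    · exact absurd ((hc.symm.trans hc' : ξ.1 i = ξ.2.1 i)) (hs i).ne'
    · exact absurd ((hc.symm.trans hc' : ξ.2.1 i = ξ.1 i)) (hs i).ne
    · exact absurd ((hc.symm.trans hc' : ξ.2.2.1 e = ξ.2.2.2 e)) (hp e).ne'
    · exact absurd ((hc.symm.trans hc' : ξ.2.2.2 e = ξ.2.2.1 e)) (hp e).ne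
  · rintro (j | ⟨(i | i | e | e), hc⟩)
    · exact Or.inl rfl
    · exact Or.inl rfl
    · right; simp [fullGrad, ineqGrad, ρ]
    · exact Or.inl rfl
    · right; ext <;> simp [fullGrad, ineqGrad, ρ]

lemma card_split {n : ℕ} (S : Finset (Fin n)) (a u l : Fin n → ℝ) (hul : ∀ i, l i < u i)
    (hS : ∀ i, i ∈ S ↔ a i = u i ∨ a i = l i) :
    S.card = Set.ncard {i | a i = u i} + Set.ncard {i | a i = l i} := by
  rw [← Set.ncard_union_eq, ← Set.ncard_coe_finset]
  · congr 1; ext i; exact hS i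
  · rw [Set.disjoint_left]
    intro i h1 h2
    exact (hul i).ne (h2.symm.trans h1)

lemma count_eq {ξ : XiT NG E} {sg : Fin NG → ℝ} {θ : Fin (NG + NL) → ℝ}
    {SG : Finset (Fin NG)} {SB : Finset (Fin E)}
    (hs : ∀ i, ξ.2.1 i < ξ.1 i) (hp : ∀ e, ξ.2.2.2 e < ξ.2.2.1 e)
    (hSG : ∀ i, i ∈ SG ↔ sg i = ξ.1 i ∨ sg i = ξ.2.1 i)
    (hSB : ∀ e, e ∈ SB ↔ ((B * Cᵀ) *ᵥ θ) e = ξ.2.2.1 e ∨ ((B * Cᵀ) *ᵥ θ) e = ξ.2.2.2 e) :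
    bindingCount C B ξ sg θ = SG.card + SB.card := by
  rw [card_split SG sg ξ.1 ξ.2.1 hs hSG, card_split SB _ ξ.2.2.1 ξ.2.2.2 hp hSB]
  unfold bindingCount
  ring

lemma Dv_self (SG : Finset (Fin NG)) (SB : Finset (Fin E))
    (hb : Function.Bijective (Rmat C B SG SB).mulVec) (c) :
    (Rmat C B SG SB *ᵥ (Dv SG SB hb c)) c = 1 := by
  classical
  unfold Dv
  rw [Rmat_Re_symm]; simp

lemma Dv_ne (SG : Finset (Fin NG)) (SB : Finset (Fin E))
    (hb : Function.Bijective (Rmat C B SG SB).mulVec) (c d) (h : d ≠ c) :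
    (Rmat C B SG SB *ᵥ (Dv SG SB hb c)) d = 0 := by
  classical
  unfold Dv
  rw [Rmat_Re_symm]; exact Pi.single_eq_of_ne h _

/-- Optimality gives the sign conditions. -/
lemma sign_of_opt (z : Fin (NG + NL)) (hz0 : (z : ℕ) = 0) {f : Fin NG → ℝ} {ξ : XiT NG E}
    {sl : Fin NL → ℝ} {SG : Finset (Fin NG)} {SB : Finset (Fin E)}
    (hb : Function.Bijective (Rmat C B SG SB).mulVec) {sg : Fin NG → ℝ}
    {θ : Fin (NG + NL) → ℝ} (hopt : IsOptimal C B f ξ sl sg θ)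
    (hs : ∀ i, ξ.2.1 i < ξ.1 i) (hp : ∀ e, ξ.2.2.2 e < ξ.2.2.1 e)
    (hSG : ∀ i, i ∈ SG ↔ sg i = ξ.1 i ∨ sg i = ξ.2.1 i)
    (hSB : ∀ e, e ∈ SB ↔ ((B * Cᵀ) *ᵥ θ) e = ξ.2.2.1 e ∨ ((B * Cᵀ) *ᵥ θ) e = ξ.2.2.2 e) :
    SignOK f ξ SG SB hb sg θ := by
  -- general move along `t • Dv c`, `c` a generator or branch row
  have key : ∀ (c : ↥SG ⊕ ↥SB) (t : ℝ),
      (∀ g : SG, c = Sum.inl g → (sg g = ξ.1 g → t ≤ 0) ∧ (sg g = ξ.2.1 g → 0 ≤ t)) →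
      (∀ e : SB, c = Sum.inr e → (((B * Cᵀ) *ᵥ θ) e = ξ.2.2.1 e → t ≤ 0) ∧
        (((B * Cᵀ) *ᵥ θ) e = ξ.2.2.2 e → 0 ≤ t)) →
      0 ≤ t * gcost C B f (Dv SG SB hb (Sum.inl (Sum.inr c))) := by
    intro c t hg he
    set v := Dv SG SB hb (Sum.inl (Sum.inr c)) with hv
    have hGv : ∀ g : SG, gpart C B (t • v) g = t * (Rmat C B SG SB *ᵥ v) (Sum.inl (Sum.inr (Sum.inl g))) := by
      intro g; simp only [gpart, Matrix.mulVec_smul]; rfl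
    have hEv : ∀ e : SB, ((B * Cᵀ) *ᵥ (t • v)) e =
        t * (Rmat C B SG SB *ᵥ v) (Sum.inl (Sum.inr (Sum.inr e))) := by
      intro e; simp only [Matrix.mulVec_smul]; rfl
    have hGv2 : ∀ g : SG, (sg g = ξ.1 g → gpart C B (t • v) g ≤ 0) ∧
        (sg g = ξ.2.1 g → 0 ≤ gpart C B (t • v) g) := by
      intro g
      rw [hGv]
      by_cases hc : c = Sum.inl g
      · rw [← hc, hv, Dv_self, mul_one]; exact hg g hc
      · rw [hv, Dv_ne _ _ _ _ _ (by intro h; apply hc; simpa using h.symm), mul_zero]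
        exact ⟨fun _ => le_rfl, fun _ => le_rfl⟩
    have hEv2 : ∀ e : SB, (((B * Cᵀ) *ᵥ θ) e = ξ.2.2.1 e → ((B * Cᵀ) *ᵥ (t • v)) e ≤ 0) ∧
        (((B * Cᵀ) *ᵥ θ) e = ξ.2.2.2 e → 0 ≤ ((B * Cᵀ) *ᵥ (t • v)) e) := by
      intro g
      rw [hEv]
      by_cases hc : c = Sum.inr g
      · rw [← hc, hv, Dv_self, mul_one]; exact he g hc
      · rw [hv, Dv_ne _ _ _ _ _ (by intro h; apply hc; simpa using h.symm), mul_zero]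
        exact ⟨fun _ => le_rfl, fun _ => le_rfl⟩
    rw [← gcost_smul]
    refine opt_dir z hz0 hopt (t • v) ?_ ?_ ?_ ?_ ?_ ?_
    · rw [Pi.smul_apply, ← Rmat_ref (C := C) (B := B) SG SB z hz0 v (), hv,
        Dv_ne _ _ _ _ _ (by simp), smul_zero]
    · intro k
      rw [Matrix.mulVec_smul, Pi.smul_apply, ← Rmat_load SG SB, hv,
        Dv_ne _ _ _ _ _ (by simp), smul_zero]
    · intro i hi
      exact (hGv2 ⟨i, (hSG i).2 (Or.inl hi)⟩).1 hi
    · intro i hi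
      exact (hGv2 ⟨i, (hSG i).2 (Or.inr hi)⟩).2 hi
    · intro i hi
      exact (hEv2 ⟨i, (hSB i).2 (Or.inl hi)⟩).1 hi
    · intro i hi
      exact (hEv2 ⟨i, (hSB i).2 (Or.inr hi)⟩).2 hi
  constructor
  · intro g
    rcases (hSG g).1 g.2 with h | h
    · right
      refine ⟨h, ?_⟩
      have := key (Sum.inl g) (-1) (by
        intro g' hg'
        obtain rfl : g = g' := by simpa using hg'
        exact ⟨fun _ => by norm_num, fun h' => absurd (h'.symm.trans h) (hs g).ne⟩) (by simp)
      linarith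
    · left
      refine ⟨h, ?_⟩
      have := key (Sum.inl g) 1 (by
        intro g' hg'
        obtain rfl : g = g' := by simpa using hg'
        exact ⟨fun h' => absurd (h.symm.trans h') (hs g).ne, fun _ => by norm_num⟩) (by simp)
      linarith
  · intro g
    rcases (hSB g).1 g.2 with h | h
    · right
      refine ⟨h, ?_⟩
      have := key (Sum.inr g) (-1) (by simp) (by
        intro g' hg'
        obtain rfl : g = g' := by simpa using hg'
        exact ⟨fun _ => by norm_num, fun h' => absurd (h'.symm.trans h) (hp g).ne⟩)
      linarith
    · left
      refine ⟨h, ?_⟩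
      have := key (Sum.inr g) 1 (by simp) (by
        intro g' hg'
        obtain rfl : g = g' := by simpa using hg'
        exact ⟨fun h' => absurd (h.symm.trans h') (hp g).ne, fun _ => by norm_num⟩)
      linarith

lemma strict_of_not_mem {ξ : XiT NG E} {sl : Fin NL → ℝ} {sg : Fin NG → ℝ}
    {θ : Fin (NG + NL) → ℝ} {SG : Finset (Fin NG)} {SB : Finset (Fin E)}
    (h : Feasible C B ξ sl sg θ)
    (hSG : ∀ i, i ∈ SG ↔ sg i = ξ.1 i ∨ sg i = ξ.2.1 i)
    (hSB : ∀ e, e ∈ SB ↔ ((B * Cᵀ) *ᵥ θ) e = ξ.2.2.1 e ∨ ((B * Cᵀ) *ᵥ θ) e = ξ.2.2.2 e) :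
    (∀ i ∉ SG, ξ.2.1 i < sg i ∧ sg i < ξ.1 i) ∧
    (∀ e ∉ SB, ξ.2.2.2 e < ((B * Cᵀ) *ᵥ θ) e ∧ ((B * Cᵀ) *ᵥ θ) e < ξ.2.2.1 e) := by
  constructor
  · intro i hi
    rw [hSG, not_or] at hi
    exact ⟨lt_of_le_of_ne (h.2.2.1 i).1 (Ne.symm hi.2), lt_of_le_of_ne (h.2.2.1 i).2 hi.1⟩
  · intro i hi
    rw [hSB, not_or] at hi
    exact ⟨lt_of_le_of_ne (h.2.2.2 i).1 (Ne.symm hi.2), lt_of_le_of_ne (h.2.2.2 i).2 hi.1⟩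

lemma dir_AB (hNG : 0 < NG) {f : Fin NG → ℝ} {ξ : XiT NG E} {sl : Fin NL → ℝ}
    (J : Matrix (Fin NG) (Fin NL) ℝ)
    (hf : f ∈ OmegaF C B) (hξ : ξ ∈ OmegaXi C B) (hsl : sl ∈ OmegaSl C B ξ)
    (hbind : ∀ sg θ, IsOptimal C B f ξ sl sg θ →
          bindingCount C B ξ sg θ = NG - 1 ∧ LinearIndependent ℝ (fullGrad C B ξ sg θ))
    (hJ : HasFDerivAt (OPFmap C B f ξ)
      (LinearMap.toContinuousLinearMap (Matrix.mulVecLin J)) sl) :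
    ∃ (SG : Finset (Fin NG)) (SB : Finset (Fin E)),
        SG.card + SB.card = NG - 1 ∧ Perp C B SG SB ∧ J = Jmatrix C B SG SB := by
  classical
  have hz0 : ((⟨0, by omega⟩ : Fin (NG + NL)) : ℕ) = 0 := rfl
  obtain ⟨⟨sg, θ⟩, hopt, -⟩ := (hf.2 ξ hξ sl hsl).1
  simp only at hopt
  obtain ⟨hcnt, hli⟩ := hbind sg θ hopt
  obtain ⟨SG, hSG⟩ : ∃ SG : Finset (Fin NG), ∀ i, i ∈ SG ↔ sg i = ξ.1 i ∨ sg i = ξ.2.1 i :=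
    ⟨Finset.univ.filter fun i => sg i = ξ.1 i ∨ sg i = ξ.2.1 i, by simp⟩
  obtain ⟨SB, hSB⟩ : ∃ SB : Finset (Fin E), ∀ e, e ∈ SB ↔ ((B * Cᵀ) *ᵥ θ) e = ξ.2.2.1 e ∨
      ((B * Cᵀ) *ᵥ θ) e = ξ.2.2.2 e :=
    ⟨Finset.univ.filter fun e => ((B * Cᵀ) *ᵥ θ) e = ξ.2.2.1 e ∨
      ((B * Cᵀ) *ᵥ θ) e = ξ.2.2.2 e, by simp⟩
  have hs := hξ.2.1
  have hp := hξ.2.2.1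
  have hcard : SG.card + SB.card = NG - 1 := by rw [← count_eq hs hp hSG hSB, hcnt]
  have hP := perp_of_full hSG hSB hli
  refine ⟨SG, SB, hcard, hP, ?_⟩
  have hb := perp_bij hNG SG SB hcard hP
  have hsign := sign_of_opt _ hz0 hb hopt hs hp hSG hSB
  obtain ⟨q1, q2⟩ := strict_of_not_mem hopt.1 hSG hSB
  have hd := stable_deriv (stable _ hz0 hf hξ hsl.1 hopt.1 hsign q1 q2)
  have heq := hJ.unique hd
  have h2 : Matrix.mulVecLin J = Matrix.mulVecLin (Jmatrix C B SG SB) :=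
    LinearMap.toContinuousLinearMap.injective heq
  exact Matrix.toLin'.injective h2

lemma dir_BA (hNG : 0 < NG) (hConn : ConnectedIncidence C) (hB : PosDiag B)
    (hNL : 0 < NL) (SG : Finset (Fin NG)) (SB : Finset (Fin E))
    (hcard : SG.card + SB.card = NG - 1) (hP : Perp C B SG SB) :
    ∃ (f : Fin NG → ℝ) (ξ : XiT NG E) (sl : Fin NL → ℝ),
        f ∈ OmegaF C B ∧ ξ ∈ OmegaXi C B ∧ sl ∈ OmegaSl C B ξ ∧
        (∀ sg θ, IsOptimal C B f ξ sl sg θ →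
          bindingCount C B ξ sg θ = NG - 1 ∧
          LinearIndependent ℝ (fullGrad C B ξ sg θ)) ∧
        ∃ U : Set (Fin NL → ℝ), IsOpen U ∧ sl ∈ U ∧ U ⊆ OmegaSl C B ξ ∧
          HasFDerivWithinAt (OPFmap C B f ξ)
            (LinearMap.toContinuousLinearMap (Matrix.mulVecLin (Jmatrix C B SG SB))) U sl := by
  classical
  obtain ⟨z, hz0⟩ : ∃ z : Fin (NG + NL), (z : ℕ) = 0 := ⟨⟨0, by omega⟩, rfl⟩
  have hb := perp_bij hNG SG SB hcard hP
  obtain ⟨f, hf0, hgen⟩ := exists_gen (C := C) (B := B) hNG hConn hB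
  have hf := gen_mem_omegaF hNG hConn hB f hf0 hgen
  have hNG' : (0 : ℝ) < NG := by exact_mod_cast hNG
  have hNL' : (0 : ℝ) < NL := by exact_mod_cast hNL
  let sl : Fin NL → ℝ := fun _ => 1
  let sg : Fin NG → ℝ := fun _ => (NL : ℝ) / NG
  have hsg : ∀ i, 0 < sg i := fun i => div_pos hNL' hNG'
  obtain ⟨θ, hθz, hθ⟩ := lap_solve hConn hB z (Fin.append sg (fun j => -(sl j))) (by
    rw [Fin.sum_univ_add]
    simp [sg, sl]
    field_simp; ring)
  let aG : Fin NG → ℝ := fun i => if h : i ∈ SG then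
    gcost C B f (Dv SG SB hb (Sum.inl (Sum.inr (Sum.inl ⟨i, h⟩)))) else 0
  let aB : Fin E → ℝ := fun e => if h : e ∈ SB then
    gcost C B f (Dv SG SB hb (Sum.inl (Sum.inr (Sum.inr ⟨e, h⟩)))) else 0
  let p : Fin E → ℝ := (B * Cᵀ) *ᵥ θ
  let ξ : XiT NG E :=
    (fun i => if i ∈ SG ∧ aG i < 0 then sg i else sg i + 1,
     fun i => if i ∈ SG ∧ 0 ≤ aG i then sg i else 0,
     fun e => if e ∈ SB ∧ aB e < 0 then p e else p e + 1,
     fun e => if e ∈ SB ∧ 0 ≤ aB e then p e else p e - 1)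
  have x1 : ∀ i, ξ.1 i = if i ∈ SG ∧ aG i < 0 then sg i else sg i + 1 := fun _ => rfl
  have x2 : ∀ i, ξ.2.1 i = if i ∈ SG ∧ 0 ≤ aG i then sg i else 0 := fun _ => rfl
  have x3 : ∀ e, ξ.2.2.1 e = if e ∈ SB ∧ aB e < 0 then p e else p e + 1 := fun _ => rfl
  have x4 : ∀ e, ξ.2.2.2 e = if e ∈ SB ∧ 0 ≤ aB e then p e else p e - 1 := fun _ => rfl
  have hfeas : Feasible C B ξ sl sg θ := by
    refine ⟨fun h => ?_, hθ, fun i => ?_, fun e => ?_⟩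
    · have : (⟨0, h⟩ : Fin (NG + NL)) = z := Fin.ext hz0.symm
      rw [this, hθz]
    · rw [x1, x2]
      have := hsg i
      constructor <;> split_ifs <;> linarith
    · rw [x3, x4]
      change _ ≤ p e ∧ p e ≤ _
      constructor <;> split_ifs <;> linarith
  have hs : ∀ i, ξ.2.1 i < ξ.1 i := by
    intro i
    rw [x1, x2]
    have := hsg i
    split_ifs with h1 h2 h2
    · exact absurd h1.2 (not_le.2 h2.2)
    · linarith
    · linarith
    · linarith
  have hp : ∀ e, ξ.2.2.2 e < ξ.2.2.1 e := by
    intro e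
    rw [x3, x4]
    split_ifs with h1 h2 h2
    · exact absurd h1.2 (not_le.2 h2.2)
    · linarith
    · linarith
    · linarith
  have hSG : ∀ i, i ∈ SG ↔ sg i = ξ.1 i ∨ sg i = ξ.2.1 i := by
    intro i
    rw [x1, x2]
    have := hsg i
    constructor
    · intro hi
      rcases lt_or_ge (aG i) 0 with h | h
      · left; rw [if_pos ⟨hi, h⟩]
      · right; rw [if_pos ⟨hi, h⟩]
    · rintro (h | h)
      · by_contra hi
        rw [if_neg (fun h => hi h.1)] at h
        linarith
      · by_contra hi
        rw [if_neg (fun h => hi h.1)] at h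
        linarith
  have hSB : ∀ e, e ∈ SB ↔ ((B * Cᵀ) *ᵥ θ) e = ξ.2.2.1 e ∨ ((B * Cᵀ) *ᵥ θ) e = ξ.2.2.2 e := by
    intro i
    rw [x3, x4]
    change _ ↔ p i = _ ∨ p i = _
    constructor
    · intro hi
      rcases lt_or_ge (aB i) 0 with h | h
      · left; rw [if_pos ⟨hi, h⟩]
      · right; rw [if_pos ⟨hi, h⟩]
    · rintro (h | h)
      · by_contra hi
        rw [if_neg (fun h => hi h.1)] at h
        linarith
      · by_contra hi
        rw [if_neg (fun h => hi h.1)] at h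
        linarith
  have hsl1 : ∀ j, 0 < sl j := fun j => one_pos
  have hsl : sl ∈ OmegaSl C B ξ := ⟨hsl1, sg, θ, hfeas⟩
  have hξ : ξ ∈ OmegaXi C B := by
    refine ⟨fun i => ?_, hs, hp, sl, hsl1, sg, θ, hfeas⟩
    rw [x2]
    have := hsg i
    split_ifs <;> linarith
  have hsign : SignOK f ξ SG SB hb sg θ := by
    constructor
    · intro g
      have hg : aG g = gcost C B f (Dv SG SB hb (Sum.inl (Sum.inr (Sum.inl g)))) := by
        simp [aG]
      rw [← hg, x1, x2]
      rcases lt_or_ge (aG g) 0 with h | h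
      · right; rw [if_pos ⟨g.2, h⟩]; exact ⟨rfl, h.le⟩
      · left; rw [if_pos ⟨g.2, h⟩]; exact ⟨rfl, h⟩
    · intro g
      have hg : aB g = gcost C B f (Dv SG SB hb (Sum.inl (Sum.inr (Sum.inr g)))) := by
        simp [aB]
      rw [← hg, x3, x4]
      rcases lt_or_ge (aB g) 0 with h | h
      · right; rw [if_pos ⟨g.2, h⟩]; exact ⟨rfl, h.le⟩
      · left; rw [if_pos ⟨g.2, h⟩]; exact ⟨rfl, h⟩
  have hopt : IsOptimal C B f ξ sl sg θ := opt_of_sign z hz0 hfeas hsign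
  obtain ⟨q1, q2⟩ := strict_of_not_mem hfeas hSG hSB
  have hst := stable z hz0 hf hξ hsl1 hfeas hsign q1 q2
  have hd := stable_deriv hst
  refine ⟨f, ξ, sl, hf, hξ, hsl, ?_, ?_⟩
  · intro sg' θ' h'
    have := (hf.2 ξ hξ sl hsl).1.unique (y₁ := (sg', θ')) (y₂ := (sg, θ)) h' hopt
    obtain ⟨rfl, rfl⟩ := Prod.mk.inj this
    exact ⟨by rw [count_eq hs hp hSG hSB, hcard], full_of_perp hs hp hSG hSB hP⟩
  · obtain ⟨U, hU, hUo, hUs⟩ := mem_nhds_iff.1 hst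
    exact ⟨U, hUo, hUs, fun x hx => (hU hx).1, hd.hasFDerivWithinAt⟩

end helpers

theorem jacobian_range_equiv {NG NL E : ℕ} (hNG : 0 < NG) (hNL : 0 < NL) (hE : 0 < E)
    (C : Matrix (Fin (NG + NL)) (Fin E) ℝ) (B : Matrix (Fin E) (Fin E) ℝ)
    (hInc : IsIncidence C) (hConn : ConnectedIncidence C) (hB : PosDiag B) :
    ({ J : Matrix (Fin NG) (Fin NL) ℝ |
      ∃ (f : Fin NG → ℝ) (ξ : XiT NG E) (sl : Fin NL → ℝ),
        f ∈ OmegaF C B ∧ ξ ∈ OmegaXi C B ∧ sl ∈ OmegaSl C B ξ ∧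
        (∀ sg θ, IsOptimal C B f ξ sl sg θ →
          bindingCount C B ξ sg θ = NG - 1 ∧
          LinearIndependent ℝ (fullGrad C B ξ sg θ)) ∧
        ∃ U : Set (Fin NL → ℝ), IsOpen U ∧ sl ∈ U ∧ U ⊆ OmegaSl C B ξ ∧
          HasFDerivWithinAt (OPFmap C B f ξ)
            (LinearMap.toContinuousLinearMap (Matrix.mulVecLin J)) U sl } =
    { J : Matrix (Fin NG) (Fin NL) ℝ |
      ∃ (SG : Finset (Fin NG)) (SB : Finset (Fin E)),
        SG.card + SB.card = NG - 1 ∧ Perp C B SG SB ∧ J = Jmatrix C B SG SB }) ∧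
    ∀ (SG : Finset (Fin NG)) (SB : Finset (Fin E)),
      SG.card + SB.card = NG - 1 → Perp C B SG SB →
      Function.Bijective (Rmat C B SG SB).mulVec := by
  refine ⟨?_, fun SG SB hc hP => perp_bij hNG SG SB hc hP⟩
  ext J
  constructor
  · rintro ⟨f, ξ, sl, hf, hξ, hsl, hbind, U, hU, hUs, -, hd⟩
    exact dir_AB hNG J hf hξ hsl hbind (hd.hasFDerivAt (hU.mem_nhds hUs))
  · rintro ⟨SG, SB, hc, hP, rfl⟩
    exact dir_BA hNG hConn hB hNL SG SB hc hP

end
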